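/- arXiv:math/0009183 — 3 statements merged into one kernel-verified Lean document; each statement's English description precedes it below -/
import Mathlib

section
/- Let n ≥ 2 and let λ and μ be gl_n-highest weights; set λ_− = (λ_1,…,λ_{n−1}), λ_+ = (λ_2,…,λ_n), μ_− = (μ_1,…,μ_{n−1}), μ_+ = (μ_2,…,μ_n), which are gl_{n−1}-highest weights. If the Y(gl_n)-module L(λ)⊗L(μ) is irreducible, then both Y(gl_{n−1})-modules L(λ_−)⊗L(μ_−) and L(λ_+)⊗L(μ_+) are irreducible. -/
open scoped TensorProduct

/-- An `n`-tuple of complex numbers is a `gl_n`-highest weight if the consecutive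
differences `λ_i - λ_{i+1}` are non-negative integers. -/
def IsGLHighestWeight (n : ℕ) (lam : Fin n → ℂ) : Prop :=
  ∀ i : Fin n, ∀ h : (i : ℕ) + 1 < n, ∃ N : ℕ, lam i - lam ⟨(i : ℕ) + 1, h⟩ = N

/-- A realization of the irreducible finite-dimensional `gl_n`-module `L(λ)`
with highest weight `lam`, given by the action of the matrix units `E i j`. -/
structure GLRep (n : ℕ) (lam : Fin n → ℂ) where
  V : Type
  [instAddCommGroup : AddCommGroup V]
  [instModule : Module ℂ V]
  [instFiniteDimensional : FiniteDimensional ℂ V]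
  E : Fin n → Fin n → (V →ₗ[ℂ] V)
  commRel : ∀ i j k l : Fin n,
    E i j ∘ₗ E k l - E k l ∘ₗ E i j
      = (if j = k then E i l else 0) - (if l = i then E k j else 0)
  hv : V
  hv_ne : hv ≠ 0
  hv_upper : ∀ i j : Fin n, i < j → E i j hv = 0
  hv_diag : ∀ i : Fin n, E i i hv = lam i • hv
  irreducible : ∀ U : Submodule ℂ V,
    (∀ i j : Fin n, ∀ v ∈ U, E i j v ∈ U) → U = ⊥ ∨ U = ⊤

attribute [instance] GLRep.instAddCommGroup GLRep.instModule GLRep.instFiniteDimensional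

/-- The action of the Yangian generator `t_{ij}^{(1)}` on `L(λ) ⊗ L(μ)`
(both evaluation modules evaluated at `0`). -/
noncomputable def t1 {n : ℕ} {lam mu : Fin n → ℂ} (A : GLRep n lam) (B : GLRep n mu)
    (i j : Fin n) : A.V ⊗[ℂ] B.V →ₗ[ℂ] A.V ⊗[ℂ] B.V :=
  TensorProduct.map (A.E i j) LinearMap.id + TensorProduct.map LinearMap.id (B.E i j)

/-- The action of the Yangian generator `t_{ij}^{(2)}` on `L(λ) ⊗ L(μ)`. -/
noncomputable def t2 {n : ℕ} {lam mu : Fin n → ℂ} (A : GLRep n lam) (B : GLRep n mu)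
    (i j : Fin n) : A.V ⊗[ℂ] B.V →ₗ[ℂ] A.V ⊗[ℂ] B.V :=
  ∑ a : Fin n, TensorProduct.map (A.E i a) (B.E a j)

/-- Irreducibility of `L(λ) ⊗ L(μ)` as a module over the Yangian `Y(gl_n)`:
the only subspaces invariant under all the operators `t1` and `t2`
(the generators `t_{ij}^{(r)}` with `r ≥ 3` acting as zero) are `⊥` and `⊤`. -/
def YangianIrred2 {n : ℕ} {lam mu : Fin n → ℂ} (A : GLRep n lam) (B : GLRep n mu) : Prop :=
  ∀ U : Submodule ℂ (A.V ⊗[ℂ] B.V),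
    (∀ i j : Fin n, ∀ v ∈ U, t1 A B i j v ∈ U) →
    (∀ i j : Fin n, ∀ v ∈ U, t2 A B i j v ∈ U) →
    U = ⊥ ∨ U = ⊤

/-
Fix an index `d`. The vectors killed by the off-diagonal entries of the `d`-th columns of the
`t^(1)` and `t^(2)` and of a fixed weight `c` for `t_dd^(1)` are singular with respect to `d`. By
the Yangian relations, the off-diagonal entries of the `d`-th rows generate from an invariant space
`K` of singular vectors a submodule of the whole module, and they raise the eigenvalue of
`t_dd^(1)` by one. Its part of weight `c` is therefore `K`, so that irreducibility forces `K` to be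
zero or the full eigenspace.

For `t^(2) = 0` and `d = n` this shows that the singular vectors in `L(λ)` of weight `λ_n` form a
simple `gl_{n-1}`-module of highest weight `λ_-`, hence a copy of `L(λ_-)`. The tensor product of
the two embeddings places `L(λ_-) ⊗ L(μ_-)` in the singular vectors of `L(λ) ⊗ L(μ)`, where the same
dichotomy applies to the image of a `Y(gl_{n-1})`-submodule. The automorphism
`E_ij ↦ -E_{n+1-j,n+1-i}` reduces `λ_+` and `μ_+` to `λ_-` and `μ_-`.
-/

section InvariantSubmodules

variable {R M N : Type*} [Semiring R] [AddCommMonoid M] [Module R M] [AddCommMonoid N] [Module R N]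

/-- The operators in `𝒳` have no common invariant submodules except `⊥` and `⊤`. The zero module
is allowed, in accordance with `GLRep` and `YangianIrred2`. -/
def ActsIrreducibly (𝒳 : Set (Module.End R M)) : Prop :=
  ∀ U : Submodule R M, (∀ X ∈ 𝒳, U ∈ X.invtSubmodule) → U = ⊥ ∨ U = ⊤

theorem ActsIrreducibly.of_linearEquiv {𝒳 : Set (Module.End R M)} {𝒴 : Set (Module.End R N)}
    (h𝒳 : ActsIrreducibly 𝒳) (e : M ≃ₗ[R] N)
    (he : ∀ X ∈ 𝒳, ∃ Y ∈ 𝒴, ∃ c : R, ∀ v, e (X v) = c • Y (e v)) : ActsIrreducibly 𝒴 := by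
  intro U hU
  have hinv : ∀ X ∈ 𝒳, U.comap (e : M →ₗ[R] N) ∈ X.invtSubmodule := by
    intro X hX v hv
    obtain ⟨Y, hY, c, hXY⟩ := he X hX
    simpa [hXY] using U.smul_mem c (hU Y hY hv)
  have hmap : (U.comap (e : M →ₗ[R] N)).map (e : M →ₗ[R] N) = U :=
    Submodule.map_comap_eq_of_surjective e.surjective U
  refine (h𝒳 _ hinv).imp (fun h ↦ ?_) (fun h ↦ ?_)
  · rw [← hmap, h, Submodule.map_bot]
  · rw [← hmap, h, Submodule.map_top, LinearEquiv.range]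

/-- The smallest submodule containing `K` and invariant under all operators in `ℒ`. -/
def invariantSpan (ℒ : Set (Module.End R M)) (K : Submodule R M) : Submodule R M :=
  sInf {U | K ≤ U ∧ ∀ X ∈ ℒ, U ∈ X.invtSubmodule}

variable {ℒ : Set (Module.End R M)} {K U : Submodule R M}

theorem le_invariantSpan : K ≤ invariantSpan ℒ K :=
  le_sInf fun _ hU ↦ hU.1

theorem invariantSpan_le (hK : K ≤ U) (hU : ∀ X ∈ ℒ, U ∈ X.invtSubmodule) :
    invariantSpan ℒ K ≤ U :=
  sInf_le ⟨hK, hU⟩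

theorem invariantSpan_mem_invtSubmodule {X : Module.End R M} (hX : X ∈ ℒ) :
    invariantSpan ℒ K ∈ X.invtSubmodule := by
  intro v hv
  simp only [invariantSpan, Submodule.mem_comap, Submodule.mem_sInf] at hv ⊢
  exact fun U hU ↦ hU.2 X hX (hv U hU)

/- The vectors of the span which all operators in `𝒬` keep in the span form a submodule, which
contains `K` by `hK` and is invariant under `ℒ` by `hℒ`. -/
theorem invariantSpan_mem_invtSubmodule_of_step {𝒬 : Set (Module.End R M)}
    (hK : ∀ P ∈ 𝒬, ∀ v ∈ K, P v ∈ invariantSpan ℒ K)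
    (hℒ : ∀ X ∈ ℒ, ∀ v ∈ invariantSpan ℒ K, (∀ P ∈ 𝒬, P v ∈ invariantSpan ℒ K) →
      ∀ P ∈ 𝒬, P (X v) ∈ invariantSpan ℒ K) :
    ∀ P ∈ 𝒬, invariantSpan ℒ K ∈ P.invtSubmodule := by
  let good : Submodule R M :=
    invariantSpan ℒ K ⊓ ⨅ P ∈ 𝒬, (invariantSpan ℒ K).comap P
  have mem_good {v : M} :
      v ∈ good ↔ v ∈ invariantSpan ℒ K ∧ ∀ P ∈ 𝒬, P v ∈ invariantSpan ℒ K := by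
    simp [good, Submodule.mem_iInf]
  have hle : invariantSpan ℒ K ≤ good := by
    refine invariantSpan_le (fun v hv ↦ mem_good.2 ⟨le_invariantSpan hv, fun P hP ↦ hK P hP v hv⟩)
      fun X hX v hv ↦ ?_
    obtain ⟨hvF, hvP⟩ := mem_good.1 hv
    exact mem_good.2 ⟨invariantSpan_mem_invtSubmodule hX hvF, hℒ X hX v hvF hvP⟩
  exact fun P hP v hv ↦ (mem_good.1 (hle hv)).2 P hP

end InvariantSubmodules

section Grading

variable {R M : Type*} [CommRing R] [AddCommGroup M] [Module R M] {H X : Module.End R M}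

theorem apply_mem_eigenspace_add_of_lie_eq_smul {a b : R} (hX : ⁅H, X⁆ = b • X) {v : M}
    (hv : v ∈ H.eigenspace a) : X v ∈ H.eigenspace (a + b) := by
  rw [Module.End.mem_eigenspace_iff] at hv ⊢
  have h : H (X v) - X (H v) = b • X v := LinearMap.congr_fun hX v
  rw [sub_eq_iff_eq_add.1 h, hv, map_smul, add_smul, add_comm]

variable [IsDomain R] [CharZero R] [Module.IsTorsionFree R M]

theorem disjoint_eigenspace_iSup_eigenspace_add (H : Module.End R M) (c : R) :
    Disjoint (H.eigenspace c) (⨆ p : ℕ+, H.eigenspace (c + (p : ℕ))) := by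
  refine (H.eigenspaces_iSupIndep c).mono_right (iSup_le fun p ↦ ?_)
  have hne : c + (p : ℕ) ≠ c := by simp
  exact le_iSup₂_of_le _ hne le_rfl

theorem invariantSpan_inf_eigenspace_le {ℒ : Set (Module.End R M)} {K : Submodule R M} {c : R}
    (hK : K ≤ H.eigenspace c) (hℒ : ∀ X ∈ ℒ, ∃ q : ℕ+, ⁅H, X⁆ = ((q : ℕ) : R) • X) :
    invariantSpan ℒ K ⊓ H.eigenspace c ≤ K := by
  let G : Submodule R M := ⨆ p : ℕ+, H.eigenspace (c + (p : ℕ))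
  have hspan : invariantSpan ℒ K ≤ K ⊔ G := by
    refine invariantSpan_le le_sup_left fun X hX ↦ ?_
    obtain ⟨q, hq⟩ := hℒ X hX
    refine (Module.End.mem_invtSubmodule X).2 (sup_le ?_ (iSup_le fun p ↦ ?_))
    · intro v hv
      exact Submodule.mem_sup_right <|
        Submodule.mem_iSup_of_mem q (apply_mem_eigenspace_add_of_lie_eq_smul hq (hK hv))
    · intro v hv
      refine Submodule.mem_sup_right (Submodule.mem_iSup_of_mem (p + q) ?_)
      rw [PNat.add_coe, Nat.cast_add, ← add_assoc]
      exact apply_mem_eigenspace_add_of_lie_eq_smul hq hv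
  calc invariantSpan ℒ K ⊓ H.eigenspace c
      ≤ (K ⊔ G) ⊓ H.eigenspace c := inf_le_inf_right _ hspan
    _ = K ⊔ G ⊓ H.eigenspace c := sup_inf_assoc_of_le G hK
    _ = K := by rw [(disjoint_eigenspace_iSup_eigenspace_add H c).symm.eq_bot, sup_bot_eq]

end Grading

section MatrixEntries

/-- The set of entries of the matrix `E` at the positions in `s`. -/
def entries {ι R : Type*} (E : ι → ι → R) (s : Set (ι × ι)) : Set R :=
  Function.uncurry E '' s

theorem forall_mem_entries {ι R : Type*} {E : ι → ι → R} {s : Set (ι × ι)} {p : R → Prop} :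
    (∀ X ∈ entries E s, p X) ↔ ∀ i j, (i, j) ∈ s → p (E i j) := by
  simp only [entries, Set.forall_mem_image, Prod.forall, Function.uncurry_apply_pair]

theorem entries_univ {ι R : Type*} (E : ι → ι → R) :
    entries E Set.univ = Set.range (Function.uncurry E) :=
  Set.image_univ

theorem forall_mem_entries_union {ι R : Type*} {E F : ι → ι → R} {s : Set (ι × ι)}
    {p : R → Prop} :
    (∀ X ∈ entries E s ∪ entries F s, p X) ↔ ∀ i j, (i, j) ∈ s → p (E i j) ∧ p (F i j) := by
  simp only [Set.mem_union, or_imp, forall_and, forall_mem_entries]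

theorem mem_entries {ι R : Type*} {E : ι → ι → R} {s : Set (ι × ι)} {i j : ι} (h : (i, j) ∈ s) :
    E i j ∈ entries E s :=
  Set.mem_image_of_mem (Function.uncurry E) h

variable {ι R : Type*} [DecidableEq ι] [Ring R] {X Y Z : ι → ι → R}

/-- The commutation pattern `[X_ij, Y_kl] = δ_jk Z_il - δ_li Z_kj`. It expresses both the defining
relations of `gl_n` and, for `Y = Z`, that the `Y_kl` transform like matrix units under the
adjoint action of `gl_n`. -/
def GLBracket (X Y Z : ι → ι → R) : Prop :=
  ∀ i j k l, ⁅X i j, Y k l⁆ = (if j = k then Z i l else 0) - (if l = i then Z k j else 0)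

/-- The defining relations of `gl_n` for the matrix units `E i j`. -/
abbrev GLRelations (E : ι → ι → R) : Prop := GLBracket E E E

theorem GLBracket.symm (h : GLBracket X Y Z) : GLBracket Y X Z := by
  intro i j k l
  have hkl : Y i j * X k l - X k l * Y i j = -⁅X k l, Y i j⁆ := by rw [Ring.lie_def, neg_sub]
  rw [Ring.lie_def, hkl, h, neg_sub]

theorem GLRelations.map {E : ι → ι → R} {R' : Type*} [Ring R'] (h : GLRelations E)
    (φ : R →+* R') : GLRelations fun i j ↦ φ (E i j) := by
  intro i j k l
  simpa [Ring.lie_def, apply_ite φ] using congrArg φ (h i j k l)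

theorem GLRelations.comp_injective {κ : Type*} [DecidableEq κ] {E : ι → ι → R}
    (h : GLRelations E) {s : κ → ι} (hs : Function.Injective s) :
    GLRelations fun i j ↦ E (s i) (s j) := by
  intro i j k l
  simpa only [hs.eq_iff] using h (s i) (s j) (s k) (s l)

/-- The relations of the Yangian `Y(gl_n)` between `T = (t_ij^(1))` and `S = (t_ij^(2))` in a
representation where the generators `t_ij^(r)` with `r ≥ 3` vanish. -/
structure YangianRelations (T S : ι → ι → R) : Prop where
  TT : GLRelations T
  TS : GLBracket T S S
  SS : ∀ i j k l, ⁅S i j, S k l⁆ = T k j * S i l - S k j * T i l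

theorem GLRelations.yangianRelations_zero {E : ι → ι → R} (h : GLRelations E) :
    YangianRelations E fun _ _ ↦ 0 :=
  ⟨h, fun _ _ _ _ ↦ by simp [Ring.lie_def], fun _ _ _ _ ↦ by simp [Ring.lie_def]⟩

end MatrixEntries

section SingularSubmodules

variable {ι R M : Type*} [CommRing R] [AddCommGroup M] [Module R M]
  {X Y Z T S : ι → ι → Module.End R M} {F K : Submodule R M} {d i j k l : ι} {c : R} {v : M}

/-- The vectors annihilated by the off-diagonal entries of the `d`-th column of `E` on which
`E d d` acts by the scalar `c`. -/
def singularSpace (E : ι → ι → Module.End R M) (d : ι) (c : R) : Submodule R M :=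
  (⨅ (i) (_ : i ≠ d), LinearMap.ker (E i d)) ⊓ (E d d).eigenspace c

theorem mem_singularSpace :
    v ∈ singularSpace T d c ↔ (∀ i ≠ d, T i d v = 0) ∧ T d d v = c • v := by
  simp [singularSpace, Submodule.mem_iInf]

/-- A space of singular vectors for a pair of matrices satisfying `YangianRelations`, invariant
under `S d d` and under the blocks of `T` and `S` which avoid the index `d`. -/
structure IsYangianSingular (T S : ι → ι → Module.End R M) (d : ι) (c : R) (K : Submodule R M) :
    Prop where
  le_singularSpace : K ≤ singularSpace T d c
  S_column : ∀ i ≠ d, ∀ v ∈ K, S i d v = 0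
  S_diagonal : K ∈ (S d d).invtSubmodule
  T_block : ∀ i ≠ d, ∀ j ≠ d, K ∈ (T i j).invtSubmodule
  S_block : ∀ i ≠ d, ∀ j ≠ d, K ∈ (S i j).invtSubmodule

/-- The submodule generated from `K` by the off-diagonal entries of the `d`-th rows of `T` and `S`,
which raise the eigenvalues of `T d d` by one. -/
def rowSpan (T S : ι → ι → Module.End R M) (d : ι) (K : Submodule R M) : Submodule R M :=
  invariantSpan (entries T ({d} ×ˢ {d}ᶜ) ∪ entries S ({d} ×ˢ {d}ᶜ)) K

theorem rowSpan_mem_invtSubmodule_row (hk : k ≠ d) :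
    rowSpan T S d K ∈ (T d k).invtSubmodule ∧ rowSpan T S d K ∈ (S d k).invtSubmodule :=
  ⟨invariantSpan_mem_invtSubmodule (.inl (mem_entries ⟨rfl, hk⟩)),
    invariantSpan_mem_invtSubmodule (.inr (mem_entries ⟨rfl, hk⟩))⟩

theorem rowSpan_mem_invtSubmodule_of_step {s : Set (ι × ι)}
    (hK : ∀ i j, (i, j) ∈ s → ∀ v ∈ K, T i j v ∈ rowSpan T S d K ∧ S i j v ∈ rowSpan T S d K)
    (hstep : ∀ k ≠ d, ∀ v ∈ rowSpan T S d K,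
      (∀ i j, (i, j) ∈ s → T i j v ∈ rowSpan T S d K ∧ S i j v ∈ rowSpan T S d K) →
      ∀ i j, (i, j) ∈ s →
        (T i j (T d k v) ∈ rowSpan T S d K ∧ S i j (T d k v) ∈ rowSpan T S d K) ∧
        T i j (S d k v) ∈ rowSpan T S d K ∧ S i j (S d k v) ∈ rowSpan T S d K) :
    ∀ i j, (i, j) ∈ s →
      rowSpan T S d K ∈ (T i j).invtSubmodule ∧ rowSpan T S d K ∈ (S i j).invtSubmodule := by
  refine forall_mem_entries_union.1 (invariantSpan_mem_invtSubmodule_of_step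
    (forall_mem_entries_union.2 fun i j hij ↦ forall₂_and.1 (hK i j hij))
    (forall_mem_entries_union.2 ?_))
  intro i k ⟨hi, hk⟩
  obtain rfl : i = d := hi
  have hstep' (v) (hv : v ∈ rowSpan T S i K)
      (hP : ∀ P ∈ entries T s ∪ entries S s, P v ∈ rowSpan T S i K) :=
    hstep k hk v hv <| (forall_mem_entries_union
      (p := fun P : Module.End R M ↦ P v ∈ rowSpan T S i K)).1 hP
  exact ⟨fun v hv hP ↦ forall_mem_entries_union.2 fun i j hij ↦ (hstep' v hv hP i j hij).1,
    fun v hv hP ↦ forall_mem_entries_union.2 fun i j hij ↦ (hstep' v hv hP i j hij).2⟩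

variable [DecidableEq ι]

theorem GLBracket.apply_apply_mem (h : GLBracket X Y Z) (hYX : Y k l (X i j v) ∈ F)
    (hil : j = k → Z i l v ∈ F) (hkj : l = i → Z k j v ∈ F) : X i j (Y k l v) ∈ F := by
  have hXY := LinearMap.congr_fun (h i j k l) v
  rw [Ring.lie_def, LinearMap.sub_apply, sub_eq_iff_eq_add] at hXY
  rw [← Module.End.mul_apply, hXY]
  refine add_mem (sub_mem ?_ ?_) hYX <;> split_ifs with hp
  exacts [hil hp, zero_mem F, hkj hp, zero_mem F]

theorem YangianRelations.apply_apply_mem (h : YangianRelations T S)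
    (hkl : S k l (S i j v) ∈ F) (hTS : T k j (S i l v) ∈ F) (hST : S k j (T i l v) ∈ F) :
    S i j (S k l v) ∈ F := by
  have hSS := LinearMap.congr_fun (h.SS i j k l) v
  rw [Ring.lie_def, LinearMap.sub_apply, sub_eq_iff_eq_add] at hSS
  rw [← Module.End.mul_apply, hSS]
  exact add_mem (sub_mem hTS hST) hkl

theorem YangianRelations.rowSpan_mem_invtSubmodule_block (h : YangianRelations T S)
    (hK : IsYangianSingular T S d c K) (hi : i ≠ d) (hj : j ≠ d) :
    rowSpan T S d K ∈ (T i j).invtSubmodule ∧ rowSpan T S d K ∈ (S i j).invtSubmodule := by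
  refine rowSpan_mem_invtSubmodule_of_step (s := {d}ᶜ ×ˢ {d}ᶜ) ?_ ?_ i j ⟨hi, hj⟩
  · rintro i j ⟨hi, hj⟩ v hv
    exact ⟨le_invariantSpan (hK.T_block i hi j hj hv), le_invariantSpan (hK.S_block i hi j hj hv)⟩
  · rintro k hk v hv hblock i j ⟨hi, hj⟩
    obtain ⟨hTk, hSk⟩ := rowSpan_mem_invtSubmodule_row (T := T) (S := S) (K := K) hk
    obtain ⟨hTj, hSj⟩ := rowSpan_mem_invtSubmodule_row (T := T) (S := S) (K := K) hj
    obtain ⟨hTij, hSij⟩ := hblock i j ⟨hi, hj⟩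
    obtain ⟨hTik, hSik⟩ := hblock i k ⟨hi, hk⟩
    exact ⟨⟨h.TT.apply_apply_mem (hTk hTij) (absurd · hj) fun _ ↦ hTj hv,
        h.TS.symm.apply_apply_mem (hTk hSij) (absurd · hj) fun _ ↦ hSj hv⟩,
      h.TS.apply_apply_mem (hSk hTij) (absurd · hj) fun _ ↦ hSj hv,
      h.apply_apply_mem (hSk hSij) (hTj hSik) (hSj hTik)⟩

theorem YangianRelations.rowSpan_mem_invtSubmodule_diagonal (h : YangianRelations T S)
    (hK : IsYangianSingular T S d c K) :
    rowSpan T S d K ∈ (T d d).invtSubmodule ∧ rowSpan T S d K ∈ (S d d).invtSubmodule := by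
  refine rowSpan_mem_invtSubmodule_of_step (s := {d} ×ˢ {d}) ?_ ?_ d d ⟨rfl, rfl⟩
  · rintro i j ⟨hi, hj⟩ v hv
    obtain ⟨rfl, rfl⟩ : i = d ∧ j = d := ⟨hi, hj⟩
    rw [(mem_singularSpace.1 (hK.le_singularSpace hv)).2]
    exact ⟨le_invariantSpan (K.smul_mem c hv), le_invariantSpan (hK.S_diagonal hv)⟩
  · rintro k hk v hv hdiag i j hij
    obtain ⟨hTk, hSk⟩ := rowSpan_mem_invtSubmodule_row (T := T) (S := S) (K := K) hk
    obtain ⟨hT, hS⟩ := hdiag i j hij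
    obtain ⟨rfl, rfl⟩ : i = d ∧ j = d := hij
    have hST : S j j (T j k v) ∈ rowSpan T S j K :=
      h.TS.symm.apply_apply_mem (hTk hS) (fun _ ↦ hSk hv) (absurd · hk)
    have hTS : T j j (S j k v) ∈ rowSpan T S j K :=
      h.TS.apply_apply_mem (hSk hT) (fun _ ↦ hSk hv) (absurd · hk)
    exact ⟨⟨h.TT.apply_apply_mem (hTk hT) (fun _ ↦ hTk hv) (absurd · hk), hST⟩, hTS,
      h.apply_apply_mem (hSk hS) hTS hST⟩

theorem YangianRelations.rowSpan_mem_invtSubmodule_column (h : YangianRelations T S)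
    (hK : IsYangianSingular T S d c K) (hi : i ≠ d) :
    rowSpan T S d K ∈ (T i d).invtSubmodule ∧ rowSpan T S d K ∈ (S i d).invtSubmodule := by
  refine rowSpan_mem_invtSubmodule_of_step (s := {d}ᶜ ×ˢ {d}) ?_ ?_ i d ⟨hi, rfl⟩
  · rintro i _ ⟨hi, rfl⟩ v hv
    simp [(mem_singularSpace.1 (hK.le_singularSpace hv)).1 i hi, hK.S_column i hi v hv]
  · rintro k hk v hv hcol i _ ⟨hi, rfl⟩
    obtain ⟨hTk, hSk⟩ := rowSpan_mem_invtSubmodule_row (T := T) (S := S) (K := K) hk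
    obtain ⟨hTd, hSd⟩ := h.rowSpan_mem_invtSubmodule_diagonal hK
    obtain ⟨hTik, hSik⟩ := h.rowSpan_mem_invtSubmodule_block hK hi hk
    obtain ⟨hT, hS⟩ := hcol i _ ⟨hi, rfl⟩
    exact ⟨⟨h.TT.apply_apply_mem (hTk hT) (fun _ ↦ hTik hv) fun _ ↦ hTd hv,
        h.TS.symm.apply_apply_mem (hTk hS) (fun _ ↦ hSik hv) fun _ ↦ hSd hv⟩,
      h.TS.apply_apply_mem (hSk hT) (fun _ ↦ hSik hv) fun _ ↦ hSd hv,
      h.apply_apply_mem (hSk hS) (hTd (hSik hv)) (hSd (hTik hv))⟩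

theorem YangianRelations.rowSpan_mem_invtSubmodule (h : YangianRelations T S)
    (hK : IsYangianSingular T S d c K) (i j : ι) :
    rowSpan T S d K ∈ (T i j).invtSubmodule ∧ rowSpan T S d K ∈ (S i j).invtSubmodule := by
  rcases eq_or_ne i d with hi | hi <;> rcases eq_or_ne j d with hj | hj
  · simpa only [hi, hj] using h.rowSpan_mem_invtSubmodule_diagonal hK
  · simpa only [hi] using rowSpan_mem_invtSubmodule_row hj
  · simpa only [hj] using h.rowSpan_mem_invtSubmodule_column hK hi
  · exact h.rowSpan_mem_invtSubmodule_block hK hi hj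

theorem GLBracket.lie_diagonal_row (h : GLBracket X Y Y) (hk : k ≠ d) :
    ⁅X d d, Y d k⁆ = Y d k := by
  simp [h d d d k, hk]

variable [IsDomain R] [CharZero R] [Module.IsTorsionFree R M]

theorem YangianRelations.eq_bot_or_eigenspace_le (h : YangianRelations T S)
    (hK : IsYangianSingular T S d c K)
    (hirr : ActsIrreducibly (entries T Set.univ ∪ entries S Set.univ)) :
    K = ⊥ ∨ (T d d).eigenspace c ≤ K := by
  have hinv : ∀ X ∈ entries T Set.univ ∪ entries S Set.univ,
      rowSpan T S d K ∈ X.invtSubmodule :=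
    forall_mem_entries_union.2 fun i j _ ↦ h.rowSpan_mem_invtSubmodule hK i j
  have hbottom : rowSpan T S d K ⊓ (T d d).eigenspace c ≤ K := by
    refine invariantSpan_inf_eigenspace_le (hK.le_singularSpace.trans inf_le_right)
      (forall_mem_entries_union.2 ?_)
    rintro _ k ⟨rfl, hk⟩
    exact ⟨⟨1, by simp [h.TT.lie_diagonal_row hk]⟩, 1, by simp [h.TS.lie_diagonal_row hk]⟩
  refine (hirr _ hinv).imp (fun hbot ↦ ?_) (fun htop ↦ ?_)
  · exact le_bot_iff.1 (le_invariantSpan.trans hbot.le)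
  · simpa [htop] using hbottom

end SingularSubmodules

section Goursat

variable {κ R V W : Type*} [Ring R] [AddCommGroup V] [Module R V] [AddCommGroup W] [Module R W]
  {X : κ → Module.End R V} {Y : κ → Module.End R W} {N : Submodule R (V × W)} {x : V} {y : W}

/- The vectors `(0, w)` in `N` form an invariant submodule of `W`, which is zero as it does not
contain `y`, and the projection of `N` to `V` is invariant and contains `x ≠ 0`. -/
theorem ActsIrreducibly.existsUnique_mem_of_subdirect (hX : ActsIrreducibly (Set.range X))
    (hY : ActsIrreducibly (Set.range Y))
    (hN : ∀ k, N ∈ Module.End.invtSubmodule ((X k).prodMap (Y k)))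
    (hxy : (x, y) ∈ N) (hy : (0, y) ∉ N) (v : V) : ∃! w, (v, w) ∈ N := by
  have fiber_eq_bot : N.comap (LinearMap.inr R V W) = ⊥ := by
    refine (hY _ ?_).resolve_right fun h ↦ hy (Submodule.mem_comap.1 (h ▸ Submodule.mem_top))
    rintro _ ⟨k, rfl⟩ w hw
    simpa using hN k hw
  have projection_eq_top : N.map (LinearMap.fst R V W) = ⊤ := by
    refine (hX _ ?_).resolve_left fun h ↦ ?_
    · rintro _ ⟨k, rfl⟩ _ ⟨p, hp, rfl⟩
      exact ⟨_, hN k hp, rfl⟩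
    · have hx : x ∈ N.map (LinearMap.fst R V W) := ⟨_, hxy, rfl⟩
      rw [h, Submodule.mem_bot] at hx
      exact hy (hx ▸ hxy)
  obtain ⟨⟨v, w⟩, hvw, rfl⟩ := projection_eq_top.ge (Submodule.mem_top (x := v))
  refine ⟨w, hvw, fun w' hvw' ↦ ?_⟩
  have hfiber : w' - w ∈ N.comap (LinearMap.inr R V W) := by
    simpa using N.sub_mem hvw' hvw
  rwa [fiber_eq_bot, Submodule.mem_bot, sub_eq_zero] at hfiber

theorem ActsIrreducibly.exists_linearEquiv_of_subdirect (hX : ActsIrreducibly (Set.range X))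
    (hY : ActsIrreducibly (Set.range Y))
    (hN : ∀ k, N ∈ Module.End.invtSubmodule ((X k).prodMap (Y k)))
    (hxy : (x, y) ∈ N) (hx : (x, 0) ∉ N) (hy : (0, y) ∉ N) :
    ∃ e : V ≃ₗ[R] W, ∀ k v, e (X k v) = Y k (e v) := by
  have right_unique := hX.existsUnique_mem_of_subdirect hY hN hxy hy
  have left_unique := hY.existsUnique_mem_of_subdirect hX
    (N := N.comap (LinearEquiv.prodComm R W V : W × V →ₗ[R] V × W)) (fun k _ hp ↦ hN k hp) hxy hx
  obtain ⟨e, rfl⟩ : ∃ e : V ≃ₗ[R] W, N = (e : V →ₗ[R] W).graph := by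
    refine Submodule.exists_equiv_eq_graph ⟨?_, fun v ↦ ?_⟩ ⟨?_, fun w ↦ ?_⟩
    · rintro ⟨⟨v, w⟩, hp⟩ ⟨⟨_, w'⟩, hq⟩ (rfl : v = _)
      exact Subtype.ext (congrArg (Prod.mk v) ((right_unique v).unique hp hq))
    · obtain ⟨w, hw, -⟩ := right_unique v
      exact ⟨⟨(v, w), hw⟩, rfl⟩
    · rintro ⟨⟨v, w⟩, hp⟩ ⟨⟨v', _⟩, hq⟩ (rfl : w = _)
      exact Subtype.ext (congrArg (·, w) ((left_unique w).unique hp hq))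
    · obtain ⟨v, hv, -⟩ := left_unique w
      exact ⟨⟨(v, w), hv⟩, rfl⟩
  refine ⟨e, fun k v ↦ Eq.symm ?_⟩
  simpa using hN k ((LinearMap.mem_graph_iff _ (v, e v)).2 rfl)

end Goursat

section LinearActions

variable {ι R V W : Type*} [DecidableEq ι] [CommRing R] [AddCommGroup V] [Module R V]
  [AddCommGroup W] [Module R W] {E : ι → ι → Module.End R V} {F : ι → ι → Module.End R W}

theorem glRelations_iff_apply :
    GLRelations E ↔ ∀ i j k l v, E i j (E k l v) - E k l (E i j v) =
      (if j = k then E i l v else 0) - (if l = i then E k j v else 0) := by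
  simp only [GLBracket, LinearMap.ext_iff]
  refine forall₅_congr fun i j k l v ↦ ?_
  rw [Ring.lie_def]
  split_ifs <;> rfl

theorem GLRelations.prodMap (hE : GLRelations E) (hF : GLRelations F) :
    GLRelations fun i j ↦ ((E i j).prodMap (F i j) : Module.End R (V × W)) := by
  rw [glRelations_iff_apply] at hE hF ⊢
  intro i j k l v
  ext
  · simpa [apply_ite Prod.fst] using hE i j k l v.1
  · simpa [apply_ite Prod.snd] using hF i j k l v.2

theorem GLRelations.of_injective (hF : GLRelations F) {f : V →ₗ[R] W} (hf : Function.Injective f)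
    (hEF : ∀ i j v, f (E i j v) = F i j (f v)) : GLRelations E := by
  rw [glRelations_iff_apply] at hF ⊢
  intro i j k l v
  apply hf
  simpa [hEF, apply_ite f] using hF i j k l (f v)

end LinearActions

section HighestWeight

variable {R V W : Type*} [CommRing R] [AddCommGroup V] [Module R V] [AddCommGroup W] [Module R W]
  {n : ℕ} {E : Fin n → Fin n → Module.End R V} {F : Fin n → Fin n → Module.End R W}
  {lam : Fin n → R}

/-- The vectors of weight `lam` annihilated by the raising operators `E i j`, `i < j`. -/
def highestWeightSpace (E : Fin n → Fin n → Module.End R V) (lam : Fin n → R) :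
    Submodule R V :=
  (⨅ (i) (j) (_ : i < j), LinearMap.ker (E i j)) ⊓ ⨅ i, (E i i).eigenspace (lam i)

theorem mem_highestWeightSpace {v : V} :
    v ∈ highestWeightSpace E lam ↔ (∀ i j, i < j → E i j v = 0) ∧ ∀ i, E i i v = lam i • v := by
  simp [highestWeightSpace, Submodule.mem_iInf]

/-- The irreducible highest weight module `L(lam)` of `gl_n`, of finite or infinite dimension. -/
structure IsSimpleHighestWeight (E : Fin n → Fin n → Module.End R V) (lam : Fin n → R) :
    Prop where
  rel : GLRelations E
  highestWeightSpace_ne_bot : highestWeightSpace E lam ≠ ⊥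
  irreducible : ActsIrreducibly (entries E Set.univ)

/-- The grading operator of a `gl_n`-module whose bracket with `E i j` is `i - j` times `E i j`. -/
def heightOperator (E : Fin n → Fin n → Module.End R V) : Module.End R V :=
  ∑ k : Fin n, (k.val : R) • E k k

theorem GLRelations.lie_heightOperator (hE : GLRelations E) (i j : Fin n) :
    ⁅heightOperator E, E i j⁆ = ((i.val : R) - j.val) • E i j := by
  simp only [heightOperator, Ring.lie_def, Finset.sum_mul, Finset.mul_sum, smul_mul_assoc,
    mul_smul_comm, ← Finset.sum_sub_distrib, ← smul_sub]
  simp [← Ring.lie_def, hE _ _ i j, smul_sub, sub_smul]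

theorem highestWeightSpace_le_eigenspace_heightOperator :
    highestWeightSpace E lam ≤ (heightOperator E).eigenspace (∑ k : Fin n, k.val * lam k) := by
  intro v hv
  rw [Module.End.mem_eigenspace_iff]
  simp [heightOperator, (mem_highestWeightSpace.1 hv).2, Finset.sum_smul, mul_smul]

/-- The submodule generated by `v` under the lowering operators. -/
def loweringSpan (E : Fin n → Fin n → Module.End R V) (v : V) : Submodule R V :=
  invariantSpan (entries E {p | p.2 < p.1}) (R ∙ v)

theorem mem_loweringSpan_self {v : V} : v ∈ loweringSpan E v :=
  le_invariantSpan (Submodule.mem_span_singleton_self v)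

theorem GLRelations.loweringSpan_mem_invtSubmodule (hE : GLRelations E) {v : V}
    (hv : v ∈ highestWeightSpace E lam) (i j : Fin n) :
    loweringSpan E v ∈ (E i j).invtSubmodule := by
  have lowering {k l} (hlk : l < k) : loweringSpan E v ∈ (E k l).invtSubmodule :=
    invariantSpan_mem_invtSubmodule (mem_entries hlk)
  have weakly_raising : ∀ P ∈ entries E {p | p.1 ≤ p.2}, loweringSpan E v ∈ P.invtSubmodule := by
    refine invariantSpan_mem_invtSubmodule_of_step (forall_mem_entries.2 ?_)
      (forall_mem_entries.2 ?_)
    · intro i j hij w hw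
      obtain ⟨a, rfl⟩ := Submodule.mem_span_singleton.1 hw
      rw [map_smul]
      refine Submodule.smul_mem _ a ?_
      obtain ⟨hraise, hweight⟩ := mem_highestWeightSpace.1 hv
      rcases (show i ≤ j from hij).eq_or_lt with rfl | hlt
      · exact hweight i ▸ Submodule.smul_mem _ _ mem_loweringSpan_self
      · exact hraise i j hlt ▸ zero_mem _
    · intro k l hlk w hw hP
      have hall (i j) : E i j w ∈ loweringSpan E v :=
        (le_or_gt i j).elim (fun hij ↦ hP _ (mem_entries hij)) (fun hji ↦ lowering hji hw)
      exact forall_mem_entries.2 fun i j _ ↦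
        hE.apply_apply_mem (lowering hlk (hall i j)) (fun _ ↦ hall i l) (fun _ ↦ hall k j)
  exact (le_or_gt i j).elim (fun hij ↦ weakly_raising _ (mem_entries hij)) lowering

theorem GLRelations.loweringSpan_inf_highestWeightSpace_le [IsDomain R] [CharZero R]
    [Module.IsTorsionFree R V] (hE : GLRelations E) {v : V} (hv : v ∈ highestWeightSpace E lam) :
    loweringSpan E v ⊓ highestWeightSpace E lam ≤ R ∙ v := by
  refine (inf_le_inf_left _ highestWeightSpace_le_eigenspace_heightOperator).trans
    (invariantSpan_inf_eigenspace_le ?_ (forall_mem_entries.2 fun i j hji ↦ ?_))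
  · exact (Submodule.span_singleton_le_iff_mem v _).2
      (highestWeightSpace_le_eigenspace_heightOperator hv)
  · have hji : j.val < i.val := hji
    exact ⟨⟨i.val - j.val, Nat.sub_pos_of_lt hji⟩, by
      rw [hE.lie_heightOperator, PNat.mk_coe, Nat.cast_sub hji.le]⟩

theorem mem_highestWeightSpace_prodMap {p : V × W} :
    p ∈ highestWeightSpace (fun i j ↦ ((E i j).prodMap (F i j) : Module.End R (V × W))) lam ↔
      p.1 ∈ highestWeightSpace E lam ∧ p.2 ∈ highestWeightSpace F lam := by
  simp only [mem_highestWeightSpace, LinearMap.prodMap_apply, Prod.ext_iff, Prod.fst_zero,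
    Prod.snd_zero, Prod.smul_fst, Prod.smul_snd]
  grind

theorem IsSimpleHighestWeight.exists_linearEquiv [IsDomain R] [CharZero R]
    [Module.IsTorsionFree R V] [Module.IsTorsionFree R W] (hE : IsSimpleHighestWeight E lam)
    (hF : IsSimpleHighestWeight F lam) :
    ∃ e : V ≃ₗ[R] W, ∀ i j v, e (E i j v) = F i j (e v) := by
  obtain ⟨x, hx, hx0⟩ := Submodule.exists_mem_ne_zero_of_ne_bot hE.highestWeightSpace_ne_bot
  obtain ⟨y, hy, hy0⟩ := Submodule.exists_mem_ne_zero_of_ne_bot hF.highestWeightSpace_ne_bot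
  have hrel := hE.rel.prodMap hF.rel
  have hxy : (x, y) ∈ highestWeightSpace
      (fun i j ↦ ((E i j).prodMap (F i j) : Module.End R (V × W))) lam :=
    mem_highestWeightSpace_prodMap.2 ⟨hx, hy⟩
  let N := loweringSpan (fun i j ↦ (E i j).prodMap (F i j)) (x, y)
  have mem_span {p : V × W} (hp : p ∈ N) (hp1 : p.1 ∈ highestWeightSpace E lam)
      (hp2 : p.2 ∈ highestWeightSpace F lam) : ∃ a : R, a • x = p.1 ∧ a • y = p.2 := by
    simpa [Submodule.mem_span_singleton, Prod.ext_iff] using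
      hrel.loweringSpan_inf_highestWeightSpace_le hxy
        ⟨hp, mem_highestWeightSpace_prodMap.2 ⟨hp1, hp2⟩⟩
  have hxN : (x, 0) ∉ N := fun hp ↦ by
    obtain ⟨a, hax, hay⟩ := mem_span hp hx (zero_mem _)
    obtain rfl := (smul_eq_zero.1 hay).resolve_right hy0
    exact hx0 (by simpa using hax.symm)
  have hyN : (0, y) ∉ N := fun hp ↦ by
    obtain ⟨a, hax, hay⟩ := mem_span hp (zero_mem _) hy
    obtain rfl := (smul_eq_zero.1 hax).resolve_right hx0
    exact hy0 (by simpa using hay.symm)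
  obtain ⟨e, he⟩ := (entries_univ E ▸ hE.irreducible).exists_linearEquiv_of_subdirect
    (entries_univ F ▸ hF.irreducible)
    (fun k ↦ hrel.loweringSpan_mem_invtSubmodule hxy k.1 k.2) mem_loweringSpan_self hxN hyN
  exact ⟨e, fun i j ↦ he (i, j)⟩

end HighestWeight

section SingularSpaces

variable {ι R V : Type*} [DecidableEq ι] [CommRing R] [AddCommGroup V] [Module R V]
  {E : ι → ι → Module.End R V} {d i j : ι} {c : R}

theorem GLRelations.singularSpace_mem_invtSubmodule (hE : GLRelations E) (hi : i ≠ d)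
    (hj : j ≠ d) : singularSpace E d c ∈ (E i j).invtSubmodule := by
  intro v hv
  obtain ⟨hcolumn, hdiagonal⟩ := mem_singularSpace.1 hv
  have hrel (k : ι) := glRelations_iff_apply.1 hE k d i j v
  refine mem_singularSpace.2 ⟨fun k hk ↦ ?_, ?_⟩
  · simpa [hcolumn k hk, hcolumn i hi, hi.symm] using hrel k
  · simpa [hdiagonal, hi.symm, hj, sub_eq_zero] using hrel d

theorem GLRelations.eq_bot_or_singularSpace_le [IsDomain R] [CharZero R] [Module.IsTorsionFree R V]
    (hE : GLRelations E) (hirr : ActsIrreducibly (entries E Set.univ)) {U : Submodule R V}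
    (hU : U ≤ singularSpace E d c) (hblock : ∀ i ≠ d, ∀ j ≠ d, U ∈ (E i j).invtSubmodule) :
    U = ⊥ ∨ singularSpace E d c ≤ U := by
  have hsingular : IsYangianSingular E (fun _ _ ↦ 0) d c U :=
    { le_singularSpace := hU
      S_column := fun _ _ _ _ ↦ rfl
      S_diagonal := fun _ _ ↦ zero_mem U
      T_block := hblock
      S_block := fun _ _ _ _ _ _ ↦ zero_mem U }
  have hirr' : ActsIrreducibly (entries E Set.univ ∪ entries (fun _ _ : ι ↦ 0) Set.univ) :=
    fun N hN ↦ hirr N fun X hX ↦ hN X (.inl hX)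
  exact (hE.yangianRelations_zero.eq_bot_or_eigenspace_le hsingular hirr').imp_right
    inf_le_right.trans

end SingularSpaces

section Truncation

variable {R V : Type*} [CommRing R] [AddCommGroup V] [Module R V] {m : ℕ}
  {E : Fin (m + 1) → Fin (m + 1) → Module.End R V}
  {lam : Fin (m + 1) → R}

/-- The `gl_m`-module structure on the singular vectors of weight `c` with respect to the last
index. -/
def truncatedAction (hE : GLRelations E) (c : R) (i j : Fin m) :
    Module.End R (singularSpace E (Fin.last m) c) :=
  (E i.castSucc j.castSucc).restrict
    (hE.singularSpace_mem_invtSubmodule i.castSucc_ne_last j.castSucc_ne_last)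

/-- An embedding of a `gl_m`-module into a `gl_{m+1}`-module whose image consists of singular
vectors of weight `c` with respect to the last index. -/
structure IsTruncationEmbedding {V' : Type*} [AddCommGroup V'] [Module R V']
    (E : Fin (m + 1) → Fin (m + 1) → Module.End R V) (E' : Fin m → Fin m → Module.End R V')
    (c : R) (f : V' →ₗ[R] V) : Prop where
  injective : Function.Injective f
  apply_castSucc : ∀ i j v, E i.castSucc j.castSucc (f v) = f (E' i j v)
  apply_mem_singularSpace : ∀ v, f v ∈ singularSpace E (Fin.last m) c

variable [IsDomain R] [CharZero R] [Module.IsTorsionFree R V]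

theorem IsSimpleHighestWeight.truncatedAction (hE : IsSimpleHighestWeight E lam) :
    IsSimpleHighestWeight (truncatedAction hE.rel (lam (Fin.last m))) fun i ↦ lam i.castSucc where
  rel := (hE.rel.comp_injective (Fin.castSucc_injective m)).of_injective
    (Submodule.injective_subtype _) fun _ _ _ ↦ rfl
  highestWeightSpace_ne_bot := by
    obtain ⟨v, hv, hv0⟩ := Submodule.exists_mem_ne_zero_of_ne_bot hE.highestWeightSpace_ne_bot
    obtain ⟨hraise, hweight⟩ := mem_highestWeightSpace.1 hv
    have hsing : v ∈ singularSpace E (Fin.last m) (lam (Fin.last m)) :=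
      mem_singularSpace.2 ⟨fun i hi ↦ hraise i _ (Fin.lt_last_iff_ne_last.2 hi), hweight _⟩
    refine (Submodule.ne_bot_iff _).2 ⟨⟨v, hsing⟩, mem_highestWeightSpace.2 ⟨?_, ?_⟩, ?_⟩
    · exact fun i j hij ↦ Subtype.ext (hraise _ _ (Fin.castSucc_lt_castSucc_iff.2 hij))
    · exact fun i ↦ Subtype.ext (hweight _)
    · exact fun h ↦ hv0 (congrArg Subtype.val h)
  irreducible := by
    intro U hU
    rw [forall_mem_entries] at hU
    have hblock : ∀ i ≠ Fin.last m, ∀ j ≠ Fin.last m,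
        U.map (Submodule.subtype _) ∈ (E i j).invtSubmodule := by
      rintro i hi j hj _ ⟨u, hu, rfl⟩
      obtain ⟨i, rfl⟩ := Fin.exists_castSucc_eq.2 hi
      obtain ⟨j, rfl⟩ := Fin.exists_castSucc_eq.2 hj
      exact ⟨_, hU i j trivial hu, rfl⟩
    refine (hE.rel.eq_bot_or_singularSpace_le hE.irreducible (Submodule.map_subtype_le _ U)
      hblock).imp (fun h ↦ ?_) fun h ↦ ?_
    · exact Submodule.map_injective_of_injective (Submodule.injective_subtype _)
        (h.trans (Submodule.map_bot _).symm)
    · refine eq_top_iff.2 fun u _ ↦ ?_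
      obtain ⟨u', hu', huu'⟩ := h u.2
      rwa [← Subtype.ext huu']

theorem IsSimpleHighestWeight.exists_isTruncationEmbedding {V' : Type*} [AddCommGroup V']
    [Module R V'] [Module.IsTorsionFree R V'] {E' : Fin m → Fin m → Module.End R V'}
    (hE : IsSimpleHighestWeight E lam) (hE' : IsSimpleHighestWeight E' fun i ↦ lam i.castSucc) :
    ∃ f : V' →ₗ[R] V, IsTruncationEmbedding E E' (lam (Fin.last m)) f := by
  obtain ⟨e, he⟩ := hE'.exists_linearEquiv hE.truncatedAction
  exact ⟨(singularSpace E _ _).subtype ∘ₗ e.toLinearMap,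
    { injective := (Submodule.injective_subtype _).comp e.injective
      apply_castSucc := fun i j v ↦ congrArg Subtype.val (he i j v).symm
      apply_mem_singularSpace := fun v ↦ (e v).2 }⟩

end Truncation

section CommutingMatrices

attribute [local instance] LieRing.ofAssociativeRing

variable {ι R : Type*} [DecidableEq ι] [Fintype ι] [Ring R] {X Y : ι → ι → R}

theorem GLRelations.yangianRelations_of_commute (hX : GLRelations X) (hY : GLRelations Y)
    (hXY : ∀ i j k l, Commute (X i j) (Y k l)) :
    YangianRelations (fun i j ↦ X i j + Y i j) fun i j ↦ ∑ a, X i a * Y a j where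
  TT i j k l := by
    have hXY' : ⁅X i j, Y k l⁆ = 0 := (hXY i j k l).lie_eq
    have hYX' : ⁅Y i j, X k l⁆ = 0 := (hXY k l i j).symm.lie_eq
    simp only [add_lie, lie_add, hXY', hYX', hX _ _ _ _, hY _ _ _ _]
    split_ifs <;> abel
  TS i j k l := by
    have hterm (a) : ⁅X i j + Y i j, X k a * Y a l⁆ =
        ⁅X i j, X k a⁆ * Y a l + X k a * ⁅Y i j, Y a l⁆ := by
      simp only [Ring.lie_def, add_mul, mul_add, sub_mul, mul_sub, ← mul_assoc, (hXY k a i j).eq]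
      simp only [mul_assoc, (hXY i j a l).eq]
      abel
    simp [lie_sum, hterm, hX _ _ _ _, hY _ _ _ _, sub_mul, mul_sub, Finset.sum_add_distrib,
      ite_mul, mul_ite, Finset.sum_ite_eq]
  SS i j k l := by
    have hterm (a b) : ⁅X i a * Y a j, X k b * Y b l⁆ =
        ⁅X i a, X k b⁆ * (Y a j * Y b l) + X k b * X i a * ⁅Y a j, Y b l⁆ := by
      have hab := (hXY k b a j).eq
      have hba := (hXY i a b l).eq
      calc ⁅X i a * Y a j, X k b * Y b l⁆
          = X i a * (Y a j * X k b) * Y b l - X k b * (Y b l * X i a) * Y a j := by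
            rw [Ring.lie_def]; noncomm_ring
        _ = _ := by rw [← hab, ← hba, Ring.lie_def, Ring.lie_def]; noncomm_ring
    simp only [sum_lie, lie_sum, hterm, hX _ _ _ _, hY _ _ _ _, sub_mul, mul_sub, ite_mul,
      mul_ite, zero_mul, mul_zero, Finset.sum_add_distrib, Finset.sum_sub_distrib,
      Finset.sum_ite_eq, Finset.sum_ite_eq', Finset.sum_ite_irrel,
      Finset.sum_const_zero, Finset.mem_univ, if_true]
    have hYX (a) : Y k j * (X i a * Y a l) = X i a * (Y k j * Y a l) := by
      rw [← mul_assoc, ← (hXY i a k j).eq, mul_assoc]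
    have hYX' (a) : X k a * Y a j * X i l = X k a * X i l * Y a j := by
      rw [mul_assoc, ← (hXY i l a j).eq, mul_assoc]
    simp only [add_mul, mul_add, Finset.mul_sum, Finset.sum_mul, Finset.sum_add_distrib, hYX, hYX',
      mul_assoc]
    abel

end CommutingMatrices

section TensorProducts

variable {ι R V W : Type*} [CommRing R] [AddCommGroup V] [Module R V] [AddCommGroup W] [Module R W]

/-- The action of `t_ij^(1)` on a tensor product of evaluation modules at `0`; compare `t1`. -/
def tensorT1 (E : ι → ι → Module.End R V) (F : ι → ι → Module.End R W) (i j : ι) :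
    Module.End R (V ⊗[R] W) :=
  TensorProduct.map (E i j) LinearMap.id + TensorProduct.map LinearMap.id (F i j)

/-- The action of `t_ij^(2)` on a tensor product of evaluation modules at `0`; compare `t2`. -/
def tensorT2 [Fintype ι] (E : ι → ι → Module.End R V) (F : ι → ι → Module.End R W) (i j : ι) :
    Module.End R (V ⊗[R] W) :=
  ∑ a, TensorProduct.map (E i a) (F a j)

/-- The operators by which the generators of the Yangian act on a tensor product of evaluation
modules at `0`. -/
def yangianOperators [Fintype ι] (E : ι → ι → Module.End R V) (F : ι → ι → Module.End R W) :
    Set (Module.End R (V ⊗[R] W)) :=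
  entries (tensorT1 E F) Set.univ ∪ entries (tensorT2 E F) Set.univ

theorem tensorT1_tmul (E : ι → ι → Module.End R V) (F : ι → ι → Module.End R W) (i j : ι)
    (v : V) (w : W) : tensorT1 E F i j (v ⊗ₜ w) = E i j v ⊗ₜ w + v ⊗ₜ F i j w :=
  rfl

theorem tensorT2_tmul [Fintype ι] (E : ι → ι → Module.End R V) (F : ι → ι → Module.End R W)
    (i j : ι) (v : V) (w : W) : tensorT2 E F i j (v ⊗ₜ w) = ∑ a, E i a v ⊗ₜ F a j w := by
  simp [tensorT2]

theorem GLRelations.yangianRelations_tensor [DecidableEq ι] [Fintype ι]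
    {E : ι → ι → Module.End R V} {F : ι → ι → Module.End R W} (hE : GLRelations E)
    (hF : GLRelations F) : YangianRelations (tensorT1 E F) (tensorT2 E F) := by
  have hcomp (f : Module.End R V) (g : Module.End R W) :
      Module.End.rTensorAlgHom R V W f * Module.End.lTensorAlgHom R W V g = TensorProduct.map f g :=
    LinearMap.rTensor_comp_lTensor V f g
  have hcommute (f : Module.End R V) (g : Module.End R W) :
      Commute (Module.End.rTensorAlgHom R V W f) (Module.End.lTensorAlgHom R W V g) :=
    (hcomp f g).trans (LinearMap.lTensor_comp_rTensor V f g).symm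
  have hrel := (hE.map (Module.End.rTensorAlgHom R V W).toRingHom).yangianRelations_of_commute
    (hF.map (Module.End.lTensorAlgHom R W V).toRingHom) fun i j k l ↦ hcommute (E i j) (F k l)
  have hT2 : tensorT2 E F = fun i j ↦
      ∑ a, Module.End.rTensorAlgHom R V W (E i a) * Module.End.lTensorAlgHom R W V (F a j) := by
    ext1 i
    ext1 j
    simp only [tensorT2, hcomp]
  rw [hT2]
  exact hrel

end TensorProducts

section TensorTruncation

variable {𝕜 V W V' W' : Type*} [Field 𝕜] [AddCommGroup V] [Module 𝕜 V] [AddCommGroup W]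
  [Module 𝕜 W] [AddCommGroup V'] [Module 𝕜 V'] [AddCommGroup W'] [Module 𝕜 W'] {m : ℕ}
  {E : Fin (m + 1) → Fin (m + 1) → Module.End 𝕜 V} {F : Fin (m + 1) → Fin (m + 1) → Module.End 𝕜 W}
  {E' : Fin m → Fin m → Module.End 𝕜 V'} {F' : Fin m → Fin m → Module.End 𝕜 W'}
  {a b : 𝕜} {f : V' →ₗ[𝕜] V} {g : W' →ₗ[𝕜] W}

namespace IsTruncationEmbedding

theorem apply_last (hf : IsTruncationEmbedding E E' a f) {i : Fin (m + 1)} (hi : i ≠ Fin.last m)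
    (v : V') : E i (Fin.last m) (f v) = 0 :=
  (mem_singularSpace.1 (hf.apply_mem_singularSpace v)).1 i hi

theorem apply_last_last (hf : IsTruncationEmbedding E E' a f) (v : V') :
    E (Fin.last m) (Fin.last m) (f v) = a • f v :=
  (mem_singularSpace.1 (hf.apply_mem_singularSpace v)).2

theorem tensorT1_castSucc_map (hf : IsTruncationEmbedding E E' a f)
    (hg : IsTruncationEmbedding F F' b g) (i j : Fin m) (z : V' ⊗[𝕜] W') :
    tensorT1 E F i.castSucc j.castSucc (TensorProduct.map f g z) =
      TensorProduct.map f g (tensorT1 E' F' i j z) := by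
  refine LinearMap.congr_fun (f := tensorT1 E F i.castSucc j.castSucc ∘ₗ TensorProduct.map f g)
    (g := TensorProduct.map f g ∘ₗ tensorT1 E' F' i j) (TensorProduct.ext' fun v w ↦ ?_) z
  simp [tensorT1_tmul, hf.apply_castSucc, hg.apply_castSucc]

theorem tensorT2_castSucc_map (hf : IsTruncationEmbedding E E' a f)
    (hg : IsTruncationEmbedding F F' b g) (i j : Fin m) (z : V' ⊗[𝕜] W') :
    tensorT2 E F i.castSucc j.castSucc (TensorProduct.map f g z) =
      TensorProduct.map f g (tensorT2 E' F' i j z) := by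
  refine LinearMap.congr_fun (f := tensorT2 E F i.castSucc j.castSucc ∘ₗ TensorProduct.map f g)
    (g := TensorProduct.map f g ∘ₗ tensorT2 E' F' i j) (TensorProduct.ext' fun v w ↦ ?_) z
  simp [tensorT2_tmul, Fin.sum_univ_castSucc, hf.apply_castSucc, hg.apply_castSucc,
    hf.apply_last i.castSucc_ne_last]

theorem map_mem_singularSpace (hf : IsTruncationEmbedding E E' a f)
    (hg : IsTruncationEmbedding F F' b g) (z : V' ⊗[𝕜] W') :
    TensorProduct.map f g z ∈ singularSpace (tensorT1 E F) (Fin.last m) (a + b) := by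
  induction z with
  | zero => simp
  | add x y hx hy => simpa using add_mem hx hy
  | tmul v w =>
    refine mem_singularSpace.2 ⟨fun i hi ↦ ?_, ?_⟩
    · simp [tensorT1_tmul, hf.apply_last hi, hg.apply_last hi]
    · simp [tensorT1_tmul, hf.apply_last_last, hg.apply_last_last, TensorProduct.smul_tmul',
        add_smul]

theorem tensorT2_last_map (hf : IsTruncationEmbedding E E' a f)
    (hg : IsTruncationEmbedding F F' b g) {i : Fin (m + 1)} (hi : i ≠ Fin.last m)
    (z : V' ⊗[𝕜] W') : tensorT2 E F i (Fin.last m) (TensorProduct.map f g z) = 0 := by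
  refine LinearMap.congr_fun (f := tensorT2 E F i (Fin.last m) ∘ₗ TensorProduct.map f g) (g := 0)
    (TensorProduct.ext' fun v w ↦ ?_) z
  simp [tensorT2_tmul, Fin.sum_univ_castSucc, hf.apply_last hi, hg.apply_last]

theorem tensorT2_last_last_map (hf : IsTruncationEmbedding E E' a f)
    (hg : IsTruncationEmbedding F F' b g) (z : V' ⊗[𝕜] W') :
    tensorT2 E F (Fin.last m) (Fin.last m) (TensorProduct.map f g z) =
      (a * b) • TensorProduct.map f g z := by
  refine LinearMap.congr_fun
    (f := tensorT2 E F (Fin.last m) (Fin.last m) ∘ₗ TensorProduct.map f g)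
    (g := (a * b) • TensorProduct.map f g) (TensorProduct.ext' fun v w ↦ ?_) z
  simp [tensorT2_tmul, Fin.sum_univ_castSucc, hf.apply_last_last, hg.apply_last,
    hg.apply_last_last, TensorProduct.smul_tmul', smul_smul, mul_comm]

theorem isYangianSingular_map (hf : IsTruncationEmbedding E E' a f)
    (hg : IsTruncationEmbedding F F' b g) {U : Submodule 𝕜 (V' ⊗[𝕜] W')}
    (hU : ∀ X ∈ yangianOperators E' F', U ∈ X.invtSubmodule) :
    IsYangianSingular (tensorT1 E F) (tensorT2 E F) (Fin.last m) (a + b)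
      (U.map (TensorProduct.map f g)) := by
  have hU' := forall_mem_entries_union.1 hU
  constructor
  · rintro _ ⟨u, -, rfl⟩
    exact hf.map_mem_singularSpace hg u
  · rintro i hi _ ⟨u, -, rfl⟩
    exact hf.tensorT2_last_map hg hi u
  · rintro _ ⟨u, hu, rfl⟩
    exact ⟨(a * b) • u, U.smul_mem _ hu, by rw [map_smul, hf.tensorT2_last_last_map hg]⟩
  · rintro i hi j hj _ ⟨u, hu, rfl⟩
    obtain ⟨i, rfl⟩ := Fin.exists_castSucc_eq.2 hi
    obtain ⟨j, rfl⟩ := Fin.exists_castSucc_eq.2 hj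
    exact ⟨_, (hU' i j trivial).1 hu, (hf.tensorT1_castSucc_map hg i j u).symm⟩
  · rintro i hi j hj _ ⟨u, hu, rfl⟩
    obtain ⟨i, rfl⟩ := Fin.exists_castSucc_eq.2 hi
    obtain ⟨j, rfl⟩ := Fin.exists_castSucc_eq.2 hj
    exact ⟨_, (hU' i j trivial).2 hu, (hf.tensorT2_castSucc_map hg i j u).symm⟩

theorem actsIrreducibly_yangianOperators [CharZero 𝕜] (hf : IsTruncationEmbedding E E' a f)
    (hg : IsTruncationEmbedding F F' b g) (hE : GLRelations E) (hF : GLRelations F)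
    (hirr : ActsIrreducibly (yangianOperators E F)) :
    ActsIrreducibly (yangianOperators E' F') := by
  intro U hU
  have hinj : Function.Injective (TensorProduct.map f g) :=
    TensorProduct.map_injective_of_flat_flat f g hf.injective hg.injective
  refine ((hE.yangianRelations_tensor hF).eq_bot_or_eigenspace_le
    (hf.isYangianSingular_map hg hU) hirr).imp (fun hbot ↦ ?_) fun hle ↦ eq_top_iff.2 fun z _ ↦ ?_
  · exact Submodule.map_injective_of_injective hinj (hbot.trans (Submodule.map_bot _).symm)
  · exact (Function.Injective.mem_set_image hinj).1 (hle (hf.map_mem_singularSpace hg z).2)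

end IsTruncationEmbedding

theorem IsSimpleHighestWeight.actsIrreducibly_yangianOperators_castSucc [CharZero 𝕜]
    {lam mu : Fin (m + 1) → 𝕜} (hE : IsSimpleHighestWeight E lam) (hF : IsSimpleHighestWeight F mu)
    (hE' : IsSimpleHighestWeight E' fun i ↦ lam i.castSucc)
    (hF' : IsSimpleHighestWeight F' fun i ↦ mu i.castSucc)
    (hirr : ActsIrreducibly (yangianOperators E F)) :
    ActsIrreducibly (yangianOperators E' F') := by
  obtain ⟨f, hf⟩ := hE.exists_isTruncationEmbedding hE'
  obtain ⟨g, hg⟩ := hF.exists_isTruncationEmbedding hF'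
  exact hf.actsIrreducibly_yangianOperators hg hE.rel hF.rel hirr

end TensorTruncation

section Duality

/-- The pullback of the action `E` of `gl_n` along the automorphism
`E i j ↦ -E (rev j) (rev i)`, which turns the weight `lam` into `-lam ∘ rev`. -/
def twist {R V : Type*} {n : ℕ} [CommRing R] [AddCommGroup V] [Module R V]
    (E : Fin n → Fin n → Module.End R V) (i j : Fin n) : Module.End R V :=
  -E j.rev i.rev

variable {R V W : Type*} [CommRing R] [AddCommGroup V] [Module R V] [AddCommGroup W] [Module R W]
  {n : ℕ}

theorem twist_apply (E : Fin n → Fin n → Module.End R V) (i j : Fin n) (v : V) :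
    twist E i j v = -E j.rev i.rev v :=
  rfl

theorem twist_twist (E : Fin n → Fin n → Module.End R V) : twist (twist E) = E := by
  ext i j v
  simp [twist_apply]

theorem GLRelations.twist {E : Fin n → Fin n → Module.End R V} (hE : GLRelations E) :
    GLRelations (twist E) := by
  rw [glRelations_iff_apply] at hE ⊢
  intro i j k l v
  have h := hE j.rev i.rev l.rev k.rev v
  simp only [Fin.rev_inj] at h
  simp only [twist_apply, map_neg, neg_neg, h, eq_comm (a := i), eq_comm (a := k)]
  split_ifs <;> abel

theorem highestWeightSpace_le_highestWeightSpace_twist {E : Fin n → Fin n → Module.End R V}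
    {lam : Fin n → R} :
    highestWeightSpace E lam ≤ highestWeightSpace (twist E) fun i ↦ -lam i.rev := by
  intro v hv
  obtain ⟨hraise, hweight⟩ := mem_highestWeightSpace.1 hv
  refine mem_highestWeightSpace.2 ⟨fun i j hij ↦ ?_, fun i ↦ ?_⟩
  · rw [twist_apply, hraise _ _ (Fin.rev_lt_rev.2 hij), neg_zero]
  · rw [twist_apply, hweight, neg_smul]

theorem IsSimpleHighestWeight.twist {E : Fin n → Fin n → Module.End R V} {lam : Fin n → R}
    (hE : IsSimpleHighestWeight E lam) :
    IsSimpleHighestWeight (twist E) fun i ↦ -lam i.rev where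
  rel := hE.rel.twist
  highestWeightSpace_ne_bot :=
    ne_bot_of_le_ne_bot hE.highestWeightSpace_ne_bot highestWeightSpace_le_highestWeightSpace_twist
  irreducible := by
    refine hE.irreducible.of_linearEquiv (.refl R V) (forall_mem_entries.2 fun i j _ ↦ ?_)
    exact ⟨_, mem_entries (i := j.rev) (j := i.rev) trivial, -1, fun v ↦ by simp [twist_apply]⟩

/- The twist reverses products, so that `t_ij^(2)` of the twisted modules is `t_{rev j, rev i}^(2)`
of the original ones with the tensor factors exchanged. -/
theorem ActsIrreducibly.yangianOperators_twist {E : Fin n → Fin n → Module.End R V}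
    {F : Fin n → Fin n → Module.End R W} (h : ActsIrreducibly (yangianOperators E F)) :
    ActsIrreducibly (yangianOperators (twist F) (twist E)) := by
  refine h.of_linearEquiv (TensorProduct.comm R V W)
    (forall_mem_entries_union.2 fun i j _ ↦ ⟨?_, ?_⟩)
  · refine ⟨_, .inl (mem_entries (i := j.rev) (j := i.rev) trivial), -1, fun z ↦ ?_⟩
    induction z with
    | zero => simp
    | add x y hx hy => simp only [map_add, smul_add, hx, hy]
    | tmul v w =>
      simp [tensorT1_tmul, twist_apply, TensorProduct.neg_tmul, TensorProduct.tmul_neg, add_comm]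
  · refine ⟨_, .inr (mem_entries (i := j.rev) (j := i.rev) trivial), 1, fun z ↦ ?_⟩
    induction z with
    | zero => simp
    | add x y hx hy => simp only [map_add, smul_add, hx, hy]
    | tmul v w =>
      simpa [tensorT2_tmul, twist_apply, TensorProduct.neg_tmul, TensorProduct.tmul_neg] using
        (Equiv.sum_comp Fin.revPerm fun a ↦ F a j w ⊗ₜ[R] E i a v).symm

theorem IsSimpleHighestWeight.actsIrreducibly_yangianOperators_succ {𝕜 V W V' W' : Type*} [Field 𝕜]
    [CharZero 𝕜] [AddCommGroup V] [Module 𝕜 V] [AddCommGroup W] [Module 𝕜 W] [AddCommGroup V']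
    [Module 𝕜 V'] [AddCommGroup W'] [Module 𝕜 W'] {m : ℕ}
    {E : Fin (m + 1) → Fin (m + 1) → Module.End 𝕜 V}
    {F : Fin (m + 1) → Fin (m + 1) → Module.End 𝕜 W}
    {E' : Fin m → Fin m → Module.End 𝕜 V'} {F' : Fin m → Fin m → Module.End 𝕜 W'}
    {lam mu : Fin (m + 1) → 𝕜} (hE : IsSimpleHighestWeight E lam) (hF : IsSimpleHighestWeight F mu)
    (hE' : IsSimpleHighestWeight E' fun i ↦ lam i.succ)
    (hF' : IsSimpleHighestWeight F' fun i ↦ mu i.succ)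
    (hirr : ActsIrreducibly (yangianOperators E F)) :
    ActsIrreducibly (yangianOperators E' F') := by
  have hweight (nu : Fin (m + 1) → 𝕜) :
      (fun i : Fin m ↦ -nu i.rev.succ) = fun i ↦ -nu i.castSucc.rev := by
    simp only [Fin.rev_castSucc]
  have htwist := hF.twist.actsIrreducibly_yangianOperators_castSucc hE.twist
    (hweight mu ▸ hF'.twist) (hweight lam ▸ hE'.twist) hirr.yangianOperators_twist
  simpa only [twist_twist] using htwist.yangianOperators_twist

end Duality

theorem GLRep.isSimpleHighestWeight {n : ℕ} {lam : Fin n → ℂ} (A : GLRep n lam) :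
    IsSimpleHighestWeight A.E lam where
  rel := A.commRel
  highestWeightSpace_ne_bot := (Submodule.ne_bot_iff _).2
    ⟨A.hv, mem_highestWeightSpace.2 ⟨A.hv_upper, A.hv_diag⟩, A.hv_ne⟩
  irreducible U hU := A.irreducible U fun i j _ hv ↦ forall_mem_entries.1 hU i j trivial hv

theorem yangianIrred2_iff {n : ℕ} {lam mu : Fin n → ℂ} {A : GLRep n lam} {B : GLRep n mu} :
    YangianIrred2 A B ↔ ActsIrreducibly (yangianOperators A.E B.E) := by
  refine forall_congr' fun U ↦ ?_
  rw [← and_imp, yangianOperators, forall_mem_entries_union]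
  simp only [Set.mem_univ, forall_true_left, forall_and]
  rfl

theorem truncated_tensor_irreducible_of_irreducible_general {𝕜 V W : Type*} [Field 𝕜] [CharZero 𝕜]
    [AddCommGroup V] [Module 𝕜 V] [AddCommGroup W] [Module 𝕜 W] {m : ℕ}
    {E : Fin (m + 1) → Fin (m + 1) → Module.End 𝕜 V}
    {F : Fin (m + 1) → Fin (m + 1) → Module.End 𝕜 W} {lam mu : Fin (m + 1) → 𝕜}
    (hE : IsSimpleHighestWeight E lam) (hF : IsSimpleHighestWeight F mu)
    (hirr : ActsIrreducibly (yangianOperators E F))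
    {V' W' : Type*} [AddCommGroup V'] [Module 𝕜 V'] [AddCommGroup W'] [Module 𝕜 W']
    {E' : Fin m → Fin m → Module.End 𝕜 V'} {F' : Fin m → Fin m → Module.End 𝕜 W'} :
    (IsSimpleHighestWeight E' (fun i ↦ lam i.castSucc) →
        IsSimpleHighestWeight F' (fun i ↦ mu i.castSucc) →
        ActsIrreducibly (yangianOperators E' F')) ∧
      (IsSimpleHighestWeight E' (fun i ↦ lam i.succ) →
        IsSimpleHighestWeight F' (fun i ↦ mu i.succ) →
        ActsIrreducibly (yangianOperators E' F')) :=
  ⟨fun hE' hF' ↦ hE.actsIrreducibly_yangianOperators_castSucc hF hE' hF' hirr,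
    fun hE' hF' ↦ hE.actsIrreducibly_yangianOperators_succ hF hE' hF' hirr⟩

/-- Let `n = m + 1 ≥ 2`.  If the `Y(gl_n)`-module
`L(λ) ⊗ L(μ)` is irreducible, then both `Y(gl_{n−1})`-modules
`L(λ_−) ⊗ L(μ_−)` and `L(λ_+) ⊗ L(μ_+)` are irreducible, where
`λ_− = (λ_1, …, λ_{n−1})` and `λ_+ = (λ_2, …, λ_n)`. -/
theorem truncated_tensor_irreducible_of_irreducible
    (m : ℕ) (hm : 1 ≤ m) (lam mu : Fin (m + 1) → ℂ)
    (hlam : IsGLHighestWeight (m + 1) lam) (hmu : IsGLHighestWeight (m + 1) mu)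
    (A : GLRep (m + 1) lam) (B : GLRep (m + 1) mu)
    (hirr : YangianIrred2 A B) :
    (∀ (A' : GLRep m fun i : Fin m => lam i.castSucc)
        (B' : GLRep m fun i : Fin m => mu i.castSucc),
        YangianIrred2 A' B') ∧
    (∀ (A' : GLRep m fun i : Fin m => lam i.succ)
        (B' : GLRep m fun i : Fin m => mu i.succ),
        YangianIrred2 A' B') := by
  have hA := A.isSimpleHighestWeight
  have hB := B.isSimpleHighestWeight
  have hAB := yangianIrred2_iff.1 hirr
  exact ⟨fun A' B' ↦ yangianIrred2_iff.2 <|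
      (truncated_tensor_irreducible_of_irreducible_general hA hB hAB).1
        A'.isSimpleHighestWeight B'.isSimpleHighestWeight,
    fun A' B' ↦ yangianIrred2_iff.2 <|
      (truncated_tensor_irreducible_of_irreducible_general hA hB hAB).2
        A'.isSimpleHighestWeight B'.isSimpleHighestWeight⟩
end

section
/- Let V be a representation of the Yangian Y(gl_n) which is irreducible (the only subspaces of V invariant under all the operators T_{ij}^{(r)} are 0 and V) and is a highest weight representation: there is a nonzero vector ζ_0 ∈ V such that T_{ij}^{(r)} ζ_0 = 0 for all i < j and r ≥ 1, and each T_{ii}^{(r)} ζ_0 is a scalar multiple of ζ_0. Then every vector ζ ∈ V satisfying T_{ij}^{(r)} ζ = 0 for all i < j and r ≥ 1 is a scalar multiple of ζ_0. -/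
/-- A representation of the Yangian `Y(gl_n)` on a complex vector space `V`:
a family of operators `T r i j` (`r ≥ 1`), with `T 0 i j = δ_{ij}·id`,
satisfying the defining relations
`[T^{(r+1)}_{ij}, T^{(s)}_{kl}] − [T^{(r)}_{ij}, T^{(s+1)}_{kl}]
  = T^{(r)}_{kj} T^{(s)}_{il} − T^{(s)}_{kj} T^{(r)}_{il}`. -/
def IsYangianRep (n : ℕ) {V : Type*} [AddCommGroup V] [Module ℂ V]
    (T : ℕ → Fin n → Fin n → (V →ₗ[ℂ] V)) : Prop :=
  (∀ i j : Fin n, T 0 i j = if i = j then LinearMap.id else 0) ∧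
  (∀ r s : ℕ, ∀ i j k l : Fin n,
    (T (r + 1) i j ∘ₗ T s k l - T s k l ∘ₗ T (r + 1) i j)
      - (T r i j ∘ₗ T (s + 1) k l - T (s + 1) k l ∘ₗ T r i j)
    = T r k j ∘ₗ T s i l - T s k j ∘ₗ T r i l)

/-!
Ordering monomials shows that lowering words `T r i j` (`j < i`) applied to a space `W` of singular
vectors stable under the `T r i i` already span a subrepresentation, because moving an operator past
a lowering one costs only terms of smaller total degree. So if `V` is irreducible and `W ≠ 0`, they
span `V`.

Grade `V` by the eigenvalues of `∑ i, i • T 1 i i`, on which `T r i j` acts by the shift `i - j`. If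
`W` has eigenvalue `c`, then `V` is the sum of `W` and the part `V'` of degrees `c + 1, c + 2, …`.
The singular vectors in `V'` generate only vectors of `V'`, which misses `W`, so there are none
but `0`, and the modular law shows that `W` contains all singular vectors.
-/

open Module.End (eigenspace mem_eigenspace_iff mem_invtSubmodule)

/-- The defining relations of the Yangian of `gl_ι` for a family `T r i j` of elements of an
arbitrary ring; for endomorphisms of a module this is a representation of the Yangian. -/
structure YangianRelations_s10 {ι A : Type*} [DecidableEq ι] [Ring A] (T : ℕ → ι → ι → A) : Prop where
  zero (i j : ι) : T 0 i j = if i = j then 1 else 0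
  lie_sub_lie (r s : ℕ) (i j k l : ι) :
    ⁅T (r + 1) i j, T s k l⁆ - ⁅T r i j, T (s + 1) k l⁆ = T r k j * T s i l - T s k j * T r i l

namespace YangianRelations_s10

section Ring

variable {ι A : Type*} [DecidableEq ι] [Ring A] {T : ℕ → ι → ι → A}

theorem lie_eq_sum (hT : YangianRelations_s10 T) (r s : ℕ) (i j k l : ι) :
    ⁅T r i j, T s k l⁆ = ∑ a ∈ Finset.range r,
      (T a k j * T (r + s - 1 - a) i l - T (r + s - 1 - a) k j * T a i l) := by
  induction r generalizing s with
  | zero =>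
    rw [hT.zero]
    split_ifs <;> simp [Ring.lie_def]
  | succ r ih =>
    rw [eq_add_of_sub_eq' (hT.lie_sub_lie r s i j k l), ih, Finset.sum_range_succ]
    simp only [show r + 1 + s - 1 = r + (s + 1) - 1 by omega,
      show r + (s + 1) - 1 - r = s by omega]

theorem lie_one (hT : YangianRelations_s10 T) (s : ℕ) (i j k l : ι) :
    ⁅T 1 i j, T s k l⁆ = (if k = j then T s i l else 0) - if i = l then T s k j else 0 := by
  simp [hT.lie_eq_sum, hT.zero]

theorem commutator_apply_mem {R V : Type*} [Ring R] [AddCommGroup V] [Module R V]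
    {T : ℕ → ι → ι → Module.End R V} (hT : YangianRelations_s10 T) {M : Submodule R V}
    {v : V} {r s : ℕ} {i j k l : ι}
    (h : ∀ a b, a + b + 1 = r + s → T a k j (T b i l v) ∈ M) :
    T r i j (T s k l v) - T s k l (T r i j v) ∈ M := by
  have hsum := LinearMap.congr_fun (hT.lie_eq_sum r s i j k l) v
  simp only [Ring.lie_def, LinearMap.sub_apply, Module.End.mul_apply, LinearMap.sum_apply] at hsum
  rw [hsum]
  refine M.sum_mem fun a ha => ?_
  have := Finset.mem_range.1 ha
  exact M.sub_mem (h _ _ (by omega)) (h _ _ (by omega))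

end Ring

section SingularVectors

variable {ι R V : Type*} [LinearOrder ι] [Ring R] [AddCommGroup V] [Module R V]
  {T : ℕ → ι → ι → Module.End R V} {W M : Submodule R V} {v : V}

/-- The space of singular vectors: those killed by all raising operators `T r i j`, `i < j`. -/
def singularVectors (T : ℕ → ι → ι → Module.End R V) : Submodule R V :=
  ⨅ (r : ℕ) (i : ι) (j : ι) (_ : i < j), (T r i j).ker

theorem mem_singularVectors :
    v ∈ singularVectors T ↔ ∀ r i j, i < j → T r i j v = 0 := by
  simp only [singularVectors, Submodule.mem_iInf, LinearMap.mem_ker]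

theorem mem_singularVectors_iff_of_one_le (hT : YangianRelations_s10 T) :
    v ∈ singularVectors T ↔ ∀ r, 1 ≤ r → ∀ i j, i < j → T r i j v = 0 := by
  rw [mem_singularVectors]
  refine ⟨fun h r _ => h r, fun h r i j hij => ?_⟩
  rcases Nat.eq_zero_or_pos r with rfl | hr
  · simp [hT.zero, hij.ne]
  · exact h r hr i j hij

theorem singularVectors_mem_invtSubmodule (hT : YangianRelations_s10 T) (s : ℕ) (k : ι) :
    singularVectors T ∈ (T s k k).invtSubmodule := by
  rw [mem_invtSubmodule]
  intro v hv
  rw [mem_singularVectors] at hv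
  refine mem_singularVectors.2 fun r i j hij => ?_
  rcases lt_or_ge k j with hkj | hjk
  · have hcomm : T s k k (T r i j v) - T r i j (T s k k v) ∈ (⊥ : Submodule R V) :=
      hT.commutator_apply_mem fun a b _ => by simp [hv b k j hkj]
    simpa [hv r i j hij] using hcomm
  · have hcomm : T r i j (T s k k v) - T s k k (T r i j v) ∈ (⊥ : Submodule R V) :=
      hT.commutator_apply_mem fun a b _ => by simp [hv b i k (hij.trans_le hjk)]
    simpa [hv r i j hij] using hcomm

/-- `IsLoweringWord T W d v` says that `v` is obtained from a vector of `W` by applying a product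
of lowering operators `T r i j`, `j < i`, whose upper indices `r ≥ 1` add up to at most `d`. -/
inductive IsLoweringWord (T : ℕ → ι → ι → Module.End R V) (W : Submodule R V) : ℕ → V → Prop
  | of_mem (d : ℕ) {w : V} (hw : w ∈ W) : IsLoweringWord T W d w
  | apply {r d e : ℕ} {i j : ι} {v : V} (hr : 1 ≤ r) (hji : j < i) (hd : r + d ≤ e)
      (hv : IsLoweringWord T W d v) : IsLoweringWord T W e (T r i j v)

/-- The span of the lowering words of degree at most `d`. -/
def loweringFiltration (T : ℕ → ι → ι → Module.End R V) (W : Submodule R V) (d : ℕ) :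
    Submodule R V :=
  Submodule.span R {v | IsLoweringWord T W d v}

theorem loweringFiltration_mono : Monotone (loweringFiltration T W) := by
  refine fun d e hde => Submodule.span_mono ?_
  rintro _ (⟨_, hw⟩ | ⟨hr, hji, hd, hv⟩)
  · exact .of_mem e hw
  · exact .apply hr hji (hd.trans hde) hv

theorem apply_mem_loweringFiltration_of_lt (hT : YangianRelations_s10 T) {r d : ℕ} {i j : ι}
    (hji : j < i) (hv : v ∈ loweringFiltration T W d) :
    T r i j v ∈ loweringFiltration T W (r + d) := by
  rcases Nat.eq_zero_or_pos r with rfl | hr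
  · simp [hT.zero, hji.ne']
  · suffices loweringFiltration T W d ≤ (loweringFiltration T W (r + d)).comap (T r i j) from
      this hv
    exact Submodule.span_le.2 fun w hw => Submodule.subset_span (.apply hr hji le_rfl hw)

theorem apply_mem_loweringFiltration (hT : YangianRelations_s10 T) (hW : W ≤ singularVectors T)
    (hdiag : ∀ r i, W ∈ (T r i i).invtSubmodule) {r d : ℕ} {i j : ι}
    (hv : v ∈ loweringFiltration T W d) : T r i j v ∈ loweringFiltration T W (r + d) := by
  induction hm : r + d using Nat.strong_induction_on generalizing r d i j v with
  | _ m ih =>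
  subst hm
  rcases lt_or_ge j i with hji | hij
  · exact hT.apply_mem_loweringFiltration_of_lt hji hv
  suffices loweringFiltration T W d ≤ (loweringFiltration T W (r + d)).comap (T r i j) from this hv
  refine Submodule.span_le.2 ?_
  rintro _ (⟨_, hw⟩ | @⟨s, e, _, k, l, u, hs, hlk, hd, hu⟩)
  · rcases hij.lt_or_eq with hij | rfl
    · simp [mem_singularVectors.1 (hW hw) r i j hij]
    · exact Submodule.subset_span (.of_mem _ (hdiag r i hw))
  · have hu : u ∈ loweringFiltration T W e := Submodule.subset_span hu
    have hcomm : T r i j (T s k l u) - T s k l (T r i j u) ∈ loweringFiltration T W (r + d) :=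
      hT.commutator_apply_mem fun a b hab =>
        loweringFiltration_mono (by omega)
          (ih (a + (b + e)) (by omega) (ih (b + e) (by omega) hu rfl) rfl)
    have hswap : T s k l (T r i j u) ∈ loweringFiltration T W (r + d) :=
      loweringFiltration_mono (by omega)
        (hT.apply_mem_loweringFiltration_of_lt hlk (ih (r + e) (by omega) hu rfl))
    simpa using add_mem hcomm hswap

/-- The span of all lowering words applied to vectors of `W`. -/
def loweringSpan (T : ℕ → ι → ι → Module.End R V) (W : Submodule R V) : Submodule R V :=
  ⨆ d, loweringFiltration T W d

theorem le_loweringSpan : W ≤ loweringSpan T W := fun _ hw =>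
  Submodule.mem_iSup_of_mem 0 (Submodule.subset_span (.of_mem 0 hw))

theorem loweringSpan_le (hWM : W ≤ M) (hM : ∀ r i j, j < i → M ∈ (T r i j).invtSubmodule) :
    loweringSpan T W ≤ M := by
  refine iSup_le fun d => Submodule.span_le.2 fun v hv => ?_
  induction hv with
  | of_mem _ hw => exact hWM hw
  | apply _ hji _ _ ih => exact hM _ _ _ hji ih

theorem loweringSpan_mem_invtSubmodule (hT : YangianRelations_s10 T) (hW : W ≤ singularVectors T)
    (hdiag : ∀ r i, W ∈ (T r i i).invtSubmodule) (r : ℕ) (i j : ι) :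
    loweringSpan T W ∈ (T r i j).invtSubmodule :=
  (mem_invtSubmodule _).2 <| iSup_le fun d _ hv =>
    Submodule.mem_iSup_of_mem (r + d) (hT.apply_mem_loweringFiltration hW hdiag hv)

/-- `V` has no subspaces invariant under all `T r i j` other than `0` and `V`. As `T 0 i j` is
scalar, the index `r = 0` imposes nothing; `V = 0` is not excluded. -/
def IsIrreducible (T : ℕ → ι → ι → Module.End R V) : Prop :=
  ∀ U : Submodule R V, (∀ r i j, U ∈ (T r i j).invtSubmodule) → U = ⊥ ∨ U = ⊤

theorem loweringSpan_eq_top (hT : YangianRelations_s10 T) (hirr : IsIrreducible T)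
    (hW : W ≤ singularVectors T) (hdiag : ∀ r i, W ∈ (T r i i).invtSubmodule) (hne : W ≠ ⊥) :
    loweringSpan T W = ⊤ :=
  (hirr _ (hT.loweringSpan_mem_invtSubmodule hW hdiag)).resolve_left fun h =>
    hne (le_bot_iff.1 (h ▸ le_loweringSpan))

end SingularVectors

section Degree

variable {n : ℕ} {R V : Type*} [CommRing R] [AddCommGroup V] [Module R V]
  {T : ℕ → Fin n → Fin n → Module.End R V} {W : Submodule R V} {v : V}

/-- The operator whose eigenvalues grade `V`; the lowering operators raise the eigenvalue. -/
def degreeOperator (T : ℕ → Fin n → Fin n → Module.End R V) : Module.End R V :=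
  ∑ i : Fin n, ((i : ℕ) : R) • T 1 i i

theorem degreeOperator_lie (hT : YangianRelations_s10 T) (s : ℕ) (k l : Fin n) :
    ⁅degreeOperator T, T s k l⁆ = (((k : ℕ) : R) - ((l : ℕ) : R)) • T s k l := by
  rw [degreeOperator, Ring.lie_def, Finset.sum_mul, Finset.mul_sum, ← Finset.sum_sub_distrib]
  simp only [smul_mul_assoc, mul_smul_comm, ← smul_sub, ← Ring.lie_def]
  simp only [hT.lie_one, smul_sub, smul_ite, smul_zero, Finset.sum_sub_distrib, Finset.sum_ite_eq,
    Finset.sum_ite_eq', Finset.mem_univ, if_true, sub_smul]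

theorem apply_mem_eigenspace_degreeOperator (hT : YangianRelations_s10 T) (s : ℕ) (k l : Fin n) {c : R}
    (hv : v ∈ eigenspace (degreeOperator T) c) :
    T s k l v ∈ eigenspace (degreeOperator T) (c + (((k : ℕ) : R) - ((l : ℕ) : R))) := by
  have hlie := LinearMap.congr_fun (hT.degreeOperator_lie s k l) v
  rw [mem_eigenspace_iff] at hv ⊢
  rw [Ring.lie_def, LinearMap.sub_apply, Module.End.mul_apply, Module.End.mul_apply, hv, map_smul,
    LinearMap.smul_apply, sub_eq_iff_eq_add'] at hlie
  rw [hlie, add_smul]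

/-- The sum of the eigenspaces of the degree operator for the eigenvalues `c + 1, c + 2, …`. -/
def degreeAbove (T : ℕ → Fin n → Fin n → Module.End R V) (c : R) : Submodule R V :=
  ⨆ m : ℕ, eigenspace (degreeOperator T) (c + (m + 1))

theorem apply_mem_degreeAbove (hT : YangianRelations_s10 T) {c : R} (s : ℕ) {k l : Fin n} (hlk : l < k)
    (hv : v ∈ eigenspace (degreeOperator T) c) : T s k l v ∈ degreeAbove T c := by
  obtain ⟨m, hm⟩ := Nat.exists_eq_add_of_lt (Fin.lt_def.1 hlk)
  refine Submodule.mem_iSup_of_mem m ?_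
  convert hT.apply_mem_eigenspace_degreeOperator s k l hv using 2
  rw [hm]
  push_cast
  ring

theorem degreeAbove_mem_invtSubmodule (hT : YangianRelations_s10 T) (c : R) (s : ℕ) {k l : Fin n}
    (hlk : l ≤ k) : degreeAbove T c ∈ (T s k l).invtSubmodule := by
  obtain ⟨e, he⟩ := Nat.exists_eq_add_of_le (Fin.le_def.1 hlk)
  refine (mem_invtSubmodule _).2 <| iSup_le fun m v hv => Submodule.mem_iSup_of_mem (m + e) ?_
  convert hT.apply_mem_eigenspace_degreeOperator s k l hv using 2
  rw [he]
  push_cast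
  ring

theorem disjoint_eigenspace_degreeAbove [IsDomain R] [CharZero R] [Module.IsTorsionFree R V]
    (T : ℕ → Fin n → Fin n → Module.End R V) (c : R) :
    Disjoint (eigenspace (degreeOperator T) c) (degreeAbove T c) := by
  refine (Module.End.eigenspaces_iSupIndep (degreeOperator T) c).mono_right (iSup_le fun m => ?_)
  exact le_iSup₂_of_le (c + (m + 1)) (by simpa using Nat.cast_add_one_ne_zero m) le_rfl

theorem loweringSpan_le_sup_degreeAbove (hT : YangianRelations_s10 T) {c : R}
    (hW : W ≤ eigenspace (degreeOperator T) c) : loweringSpan T W ≤ W ⊔ degreeAbove T c :=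
  loweringSpan_le le_sup_left fun r _ _ hji => (mem_invtSubmodule _).2 <| sup_le
    (fun _ hw => Submodule.mem_sup_right (hT.apply_mem_degreeAbove r hji (hW hw)))
    ((hT.degreeAbove_mem_invtSubmodule c r hji.le).trans (Submodule.comap_mono le_sup_right))

variable [IsDomain R] [CharZero R] [Module.IsTorsionFree R V]

theorem singularVectors_inf_degreeAbove_eq_bot (hT : YangianRelations_s10 T) (hirr : IsIrreducible T)
    {c : R} (hc : eigenspace (degreeOperator T) c ≠ ⊥) :
    singularVectors T ⊓ degreeAbove T c = ⊥ := by
  by_contra hne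
  have hspan : loweringSpan T (singularVectors T ⊓ degreeAbove T c) = ⊤ :=
    hT.loweringSpan_eq_top hirr inf_le_left (fun r i => Sublattice.inf_mem
      (hT.singularVectors_mem_invtSubmodule r i)
      (hT.degreeAbove_mem_invtSubmodule c r le_rfl)) hne
  have htop : degreeAbove T c = ⊤ := top_le_iff.1 <| hspan ▸
    loweringSpan_le inf_le_right fun r _ _ hji => hT.degreeAbove_mem_invtSubmodule c r hji.le
  exact hc (disjoint_top.1 (htop ▸ disjoint_eigenspace_degreeAbove T c))

theorem singularVectors_eq_of_le_eigenspace (hT : YangianRelations_s10 T) (hirr : IsIrreducible T)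
    {c : R} (hW : W ≤ singularVectors T) (hdiag : ∀ r i, W ∈ (T r i i).invtSubmodule)
    (hWc : W ≤ eigenspace (degreeOperator T) c) (hne : W ≠ ⊥) : singularVectors T = W := by
  have htop : W ⊔ degreeAbove T c = ⊤ :=
    top_le_iff.1 (hT.loweringSpan_eq_top hirr hW hdiag hne ▸ hT.loweringSpan_le_sup_degreeAbove hWc)
  calc singularVectors T = (W ⊔ degreeAbove T c) ⊓ singularVectors T := by rw [htop, top_inf_eq]
    _ = W ⊔ degreeAbove T c ⊓ singularVectors T := sup_inf_assoc_of_le _ hW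
    _ = W := by
      rw [inf_comm, hT.singularVectors_inf_degreeAbove_eq_bot hirr (ne_bot_of_le_ne_bot hne hWc),
        sup_bot_eq]

end Degree

end YangianRelations_s10

open YangianRelations_s10

theorem singular_vector_proportional_highest_general
    {n : ℕ} {K V : Type*} [Field K] [CharZero K] [AddCommGroup V] [Module K V]
    {T : ℕ → Fin n → Fin n → Module.End K V} (hT : YangianRelations_s10 T)
    (hirr : ∀ U : Submodule K V,
      (∀ r : ℕ, 1 ≤ r → ∀ i j : Fin n, ∀ v ∈ U, T r i j v ∈ U) → U = ⊥ ∨ U = ⊤)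
    {ζ₀ : V} (hζ₀ : ζ₀ ≠ 0)
    (hup : ∀ r : ℕ, 1 ≤ r → ∀ i j : Fin n, i < j → T r i j ζ₀ = 0)
    (hdiag : ∀ r : ℕ, 1 ≤ r → ∀ i : Fin n, ∃ c : K, T r i i ζ₀ = c • ζ₀)
    {ζ : V} (hζ : ∀ r : ℕ, 1 ≤ r → ∀ i j : Fin n, i < j → T r i j ζ = 0) :
    ∃ c : K, ζ = c • ζ₀ := by
  rw [← hT.mem_singularVectors_iff_of_one_le] at hup hζ
  have hirr' : IsIrreducible T := fun U hU => hirr U fun r _ i j _ hv => hU r i j hv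
  have hinv : ∀ r i, K ∙ ζ₀ ∈ (T r i i).invtSubmodule := by
    intro r i
    rw [mem_invtSubmodule, Submodule.span_singleton_le_iff_mem, Submodule.mem_comap]
    rcases Nat.eq_zero_or_pos r with rfl | hr
    · simp [hT.zero]
    · obtain ⟨c, hc⟩ := hdiag r hr i
      exact hc ▸ Submodule.smul_mem _ c (Submodule.mem_span_singleton_self ζ₀)
  choose w hw using hdiag 1 le_rfl
  have hdeg : K ∙ ζ₀ ≤ eigenspace (degreeOperator T) (∑ i : Fin n, ((i : ℕ) : K) * w i) := by
    rw [Submodule.span_singleton_le_iff_mem, mem_eigenspace_iff]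
    simp [degreeOperator, hw, Finset.sum_smul, mul_smul]
  have hspan : singularVectors T = K ∙ ζ₀ :=
    hT.singularVectors_eq_of_le_eigenspace hirr' (by simpa using hup) hinv hdeg (by simpa using hζ₀)
  obtain ⟨c, hc⟩ := Submodule.mem_span_singleton.1 (hspan ▸ hζ)
  exact ⟨c, hc.symm⟩

/-- In an irreducible highest weight representation of the
Yangian `Y(gl_n)`, every vector annihilated by all `T^{(r)}_{ij}` with `i < j`
is a scalar multiple of the highest vector. -/
theorem singular_vector_proportional_highest
    (n : ℕ) {V : Type*} [AddCommGroup V] [Module ℂ V]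
    (T : ℕ → Fin n → Fin n → (V →ₗ[ℂ] V)) (hT : IsYangianRep n T)
    (hirr : ∀ U : Submodule ℂ V,
      (∀ r : ℕ, 1 ≤ r → ∀ i j : Fin n, ∀ v ∈ U, T r i j v ∈ U) → U = ⊥ ∨ U = ⊤)
    (ζ₀ : V) (hζ₀ : ζ₀ ≠ 0)
    (hup : ∀ r : ℕ, 1 ≤ r → ∀ i j : Fin n, i < j → T r i j ζ₀ = 0)
    (hdiag : ∀ r : ℕ, 1 ≤ r → ∀ i : Fin n, ∃ c : ℂ, T r i i ζ₀ = c • ζ₀)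
    (ζ : V) (hζ : ∀ r : ℕ, 1 ≤ r → ∀ i j : Fin n, i < j → T r i j ζ = 0) :
    ∃ c : ℂ, ζ = c • ζ₀ :=
  singular_vector_proportional_highest_general ⟨hT.1, hT.2⟩ hirr hζ₀ hup hdiag hζ
end

section
/- Let V be a representation of the Yangian Y(gl_n). For any l ≥ 1, any indices c_1,…,c_l, d_1,…,d_l ∈ {1,…,n} and any i, j ∈ {1,…,l}, the series t_{c_i d_j}(u) commutes with the quantum minor t^{c_1⋯c_l}_{d_1⋯d_l}(v): every coefficient of the series t_{c_i d_j}(u) commutes (in End(V)) with every coefficient of the series t^{c_1⋯c_l}_{d_1⋯d_l}(v). -/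
/-- Coefficients of the series `f(u − c)`, where `f(u) = Σ_r f_r u^{−r}` has
coefficients `f : ℕ → End(V)`: substitution is performed coefficientwise via
`(u−c)^{−r} = Σ_m (binom (m−1) (m−r)) c^{m−r} u^{−m}`. -/
noncomputable def shiftSer {V : Type*} [AddCommGroup V] [Module ℂ V]
    (c : ℂ) (f : ℕ → (V →ₗ[ℂ] V)) : ℕ → (V →ₗ[ℂ] V) :=
  fun m => ∑ r ∈ Finset.range (m + 1),
    (((m - 1).choose (m - r) : ℂ) * c ^ (m - r)) • f r

/-- Cauchy product of two `End(V)`-valued series in `u⁻¹`. -/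
noncomputable def mulSer {V : Type*} [AddCommGroup V] [Module ℂ V]
    (f g : ℕ → (V →ₗ[ℂ] V)) : ℕ → (V →ₗ[ℂ] V) :=
  fun m => ∑ r ∈ Finset.range (m + 1), f r ∘ₗ g (m - r)

/-- Product of a list of `End(V)`-valued series in `u⁻¹` (in the given order). -/
noncomputable def prodSer {V : Type*} [AddCommGroup V] [Module ℂ V] :
    List (ℕ → (V →ₗ[ℂ] V)) → ℕ → (V →ₗ[ℂ] V)
  | [] => fun m => if m = 0 then LinearMap.id else 0
  | f :: rest => mulSer f (prodSer rest)

/-- The quantum minor `t^{a_1⋯a_l}_{b_1⋯b_l}(u)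
= Σ_{σ ∈ S_l} sgn σ · t_{a_{σ(1)} b_1}(u) t_{a_{σ(2)} b_2}(u−1) ⋯
t_{a_{σ(l)} b_l}(u−l+1)`, as an `End(V)`-valued series in `u⁻¹` given by its
coefficients. -/
noncomputable def qminorSer {n : ℕ} {V : Type*} [AddCommGroup V] [Module ℂ V]
    (T : ℕ → Fin n → Fin n → (V →ₗ[ℂ] V)) (l : ℕ) (a b : Fin l → Fin n) :
    ℕ → (V →ₗ[ℂ] V) :=
  fun m => ∑ σ : Equiv.Perm (Fin l),
    (((Equiv.Perm.sign σ : ℤ) : ℂ)) •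
      prodSer (List.ofFn fun s : Fin l =>
        shiftSer ((s : ℕ) : ℂ) fun r => T r (a (σ s)) (b s)) m

/-!
For the quantum minor `Q(v)` with rows `a` and columns `b`, write `Q(a_i → k)` and `Q(b_i → l)` for
the minors with one index replaced. Then

  `(u - v) [t_kl(u), Q(v)] = ∑ i, t_{a_i l}(u) Q(a_i → k)(v) - ∑ i, Q(b_i → l)(v) t_{k b_i}(u)`,

by induction on the size: expand along the first column, apply the defining relation to the first
factor and the induction hypothesis to the remaining minor, and antisymmetrize over the rows. For
`k = a_i` and `l = b_j` all minors on the right with a repeated index vanish, and what remains is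
`(u - v - 1) [t_kl(u), Q(v)] = 0`. Here `u - v - 1` may be cancelled, which is made precise in the
ring of power series in `u⁻¹` over power series in `v⁻¹`, after clearing denominators.
-/

namespace Yangian

open Equiv PowerSeries
open Function (update update_self update_of_ne update_idem)

lemma eq_zero_of_comp_swap_eq_neg {ι I M : Type*} [DecidableEq ι] [AddCommGroup M]
    [IsAddTorsionFree M] {f : (ι → I) → M} {a : ι → I} {i j : ι}
    (hf : f (a ∘ swap i j) = -f a) (ha : a i = a j) : f a = 0 := by
  have hswap : a ∘ swap i j = a := by
    funext r
    obtain rfl | hi := eq_or_ne r i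
    · simp [ha]
    obtain rfl | hj := eq_or_ne r j
    · simp [ha]
    rw [Function.comp_apply, swap_apply_of_ne_of_ne hi hj]
  rwa [hswap, self_eq_neg] at hf

section Alternate

variable {ι I M N : Type*} [Fintype ι] [DecidableEq ι] [AddCommGroup M] [AddCommGroup N]

/-- The antisymmetrization of a function of a multi-index `a : ι → I`, without a normalizing
factor. -/
def alternate (f : (ι → I) → M) (a : ι → I) : M :=
  ∑ σ : Perm ι, Perm.sign σ • f (a ∘ σ)

lemma alternate_comp_perm (f : (ι → I) → M) (a : ι → I) (π : Perm ι) :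
    alternate f (a ∘ π) = Perm.sign π • alternate f a := by
  rw [alternate, alternate, Finset.smul_sum]
  refine Fintype.sum_equiv (Equiv.mulLeft π) _ _ fun σ => ?_
  rw [Equiv.coe_mulLeft, Perm.sign_mul, mul_smul, smul_smul, Int.units_mul_self, one_smul,
    Perm.coe_mul, Function.comp_assoc]

lemma alternate_fun_comp_perm (f : (ι → I) → M) (a : ι → I) (π : Perm ι) :
    alternate (fun x => f (x ∘ π)) a = Perm.sign π • alternate f a := by
  rw [alternate, alternate, Finset.smul_sum]
  refine Fintype.sum_equiv (Equiv.mulRight π) _ _ fun σ => ?_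
  rw [Equiv.coe_mulRight, Perm.sign_mul, mul_comm, mul_smul, smul_smul, Int.units_mul_self,
    one_smul, Perm.coe_mul, Function.comp_assoc]

lemma map_alternate (φ : M →+ N) (f : (ι → I) → M) (a : ι → I) :
    φ (alternate f a) = alternate (fun x => φ (f x)) a := by
  simp only [alternate, map_sum, Units.smul_def, map_zsmul]

lemma alternate_smul {R : Type*} [Monoid R] [DistribMulAction R M] (r : R) (f : (ι → I) → M)
    (a : ι → I) : alternate (fun x => r • f x) a = r • alternate f a :=
  (map_alternate (DistribSMul.toAddMonoidHom M r) f a).symm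

lemma alternate_mul_left {S : Type*} [Ring S] (r : S) (f : (ι → I) → S) (a : ι → I) :
    alternate (fun x => r * f x) a = r * alternate f a :=
  (map_alternate (AddMonoidHom.mulLeft r) f a).symm

lemma alternate_mul_right {S : Type*} [Ring S] (f : (ι → I) → S) (r : S) (a : ι → I) :
    alternate (fun x => f x * r) a = alternate f a * r :=
  (map_alternate (AddMonoidHom.mulRight r) f a).symm

lemma alternate_add (f g : (ι → I) → M) (a : ι → I) :
    alternate (fun x => f x + g x) a = alternate f a + alternate g a := by
  simp only [alternate, smul_add, Finset.sum_add_distrib]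

lemma alternate_sub (f g : (ι → I) → M) (a : ι → I) :
    alternate (fun x => f x - g x) a = alternate f a - alternate g a := by
  simp only [alternate, smul_sub, Finset.sum_sub_distrib]

lemma sum_alternate {κ : Type*} (s : Finset κ) (f : κ → (ι → I) → M) (a : ι → I) :
    ∑ i ∈ s, alternate (f i) a = alternate (fun x => ∑ i ∈ s, f i x) a := by
  simp only [alternate, Finset.smul_sum]
  exact Finset.sum_comm

lemma alternate_comp_swap (f : (ι → I) → M) (a : ι → I) {i j : ι} (hij : i ≠ j) :
    alternate f (a ∘ swap i j) = -alternate f a := by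
  rw [alternate_comp_perm, Perm.sign_swap hij, Units.neg_smul, one_smul]

lemma alternate_fun_comp_swap (f : (ι → I) → M) (a : ι → I) {i j : ι} (hij : i ≠ j) :
    alternate (fun x => f (x ∘ swap i j)) a = -alternate f a := by
  rw [alternate_fun_comp_perm, Perm.sign_swap hij, Units.neg_smul, one_smul]

lemma lie_alternate {S : Type*} [Ring S] (r : S) (f : (ι → I) → S) (a : ι → I) :
    ⁅r, alternate f a⁆ = alternate (fun x => ⁅r, f x⁆) a := by
  simp only [Ring.lie_def, alternate_sub, alternate_mul_left, alternate_mul_right]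

lemma sum_alternate_update (F : I → (ι → I) → M) (a : ι → I) (k : I) :
    ∑ i, alternate (fun x => F (x i) (update x i k)) a
      = ∑ i, alternate (F (a i)) (update a i k) := by
  refine (Finset.sum_comm.trans (Finset.sum_congr rfl fun σ _ => ?_)).trans Finset.sum_comm
  refine Fintype.sum_equiv σ _ _ fun i => ?_
  exact congrArg (fun x => Perm.sign σ • F (a (σ i)) x)
    (Function.update_comp_eq_of_injective a σ.injective i k).symm

end Alternate

section QuantumMinor

variable {S I : Type*} [Ring S] {m : ℕ}

/-- The product `t_0(a_0, b_0) t_1(a_1, b_1) ⋯ t_{m-1}(a_{m-1}, b_{m-1})` of entries of a sequence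
of matrices; for the Yangian, `t_s` is the generating matrix evaluated at `u - s`. -/
def diagProd (t : ℕ → I → I → S) (a b : Fin m → I) : S :=
  (List.ofFn fun s : Fin m => t s (a s) (b s)).prod

/-- The quantum minor of a sequence of matrices `t_0, t_1, …` with rows `a` and columns `b`. -/
def qminor (t : ℕ → I → I → S) (a b : Fin m → I) : S :=
  alternate (fun x => diagProd t x b) a

/-- The relation between consecutive members of a sequence of matrices to which the defining
relation of the Yangian specializes at `u - v = 1`. -/
def IsFused (t : ℕ → I → I → S) : Prop :=
  ∀ s i j k l, ⁅t s i j, t (s + 1) k l⁆ = t s k j * t (s + 1) i l - t (s + 1) k j * t s i l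

lemma map_qminor {S' : Type*} [Ring S'] (φ : S →+* S') (t : ℕ → I → I → S) (a b : Fin m → I) :
    φ (qminor t a b) = qminor (fun s i j => φ (t s i j)) a b := by
  refine (map_alternate φ.toAddMonoidHom _ a).trans (congrArg (alternate · a) ?_)
  funext x
  simp [diagProd, map_list_prod, List.map_ofFn, Function.comp_def]

lemma IsFused.map {S' : Type*} [Ring S'] {t : ℕ → I → I → S} (ht : IsFused t)
    (φ : S →+* S') : IsFused fun s i j => φ (t s i j) := by
  intro s i j k l
  simpa only [Ring.lie_def, map_sub, map_mul] using congrArg φ (ht s i j k l)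

lemma IsFused.add_column_swap {t : ℕ → I → I → S} (ht : IsFused t) (s : ℕ) (i j k l : I) :
    t s i j * t (s + 1) k l + t s i l * t (s + 1) k j
      = t s k j * t (s + 1) i l + t s k l * t (s + 1) i j := by
  have hsum := congrArg₂ (· + ·) (ht s i j k l) (ht s i l k j)
  simp only [Ring.lie_def] at hsum
  rw [← sub_eq_zero] at hsum ⊢
  rw [← hsum]
  abel

lemma diagProd_succ (t : ℕ → I → I → S) (a b : Fin (m + 1) → I) :
    diagProd t a b
      = t 0 (a 0) (b 0) * diagProd (fun s => t (s + 1)) (Fin.tail a) (Fin.tail b) := by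
  simp [diagProd, List.ofFn_succ, Fin.tail]

lemma tail_comp_swap_succ (a : Fin (m + 1) → I) (i j : Fin m) :
    Fin.tail (a ∘ swap i.succ j.succ) = Fin.tail a ∘ swap i j := by
  funext r
  simp only [Fin.tail, Function.comp_apply, (Fin.succ_injective m).swap_apply]

lemma IsFused.diagProd_add_comp_swap {t : ℕ → I → I → S} (ht : IsFused t)
    (a b : Fin (m + 1) → I) (i : Fin m) :
    diagProd t (a ∘ swap i.castSucc i.succ) b
        + diagProd t (a ∘ swap i.castSucc i.succ) (b ∘ swap i.castSucc i.succ)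
      = diagProd t a b + diagProd t a (b ∘ swap i.castSucc i.succ) := by
  induction m generalizing t with
  | zero => exact i.elim0
  | succ m ih =>
    cases i using Fin.cases with
    | zero =>
      have htail (x : Fin (m + 2) → I) :
          Fin.tail (Fin.tail (x ∘ swap 0 1)) = Fin.tail (Fin.tail x) := by
        funext r
        exact congrArg x (swap_apply_of_ne_of_ne (Fin.succ_ne_zero _) (by simp [Fin.ext_iff]))
      simp only [diagProd_succ, Fin.castSucc_zero, Fin.succ_zero_eq_one, htail, Fin.tail,
        Function.comp_apply, swap_apply_left, swap_apply_right, ← mul_assoc, ← add_mul]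
      rw [zero_add, ht.add_column_swap 0]
    | succ i =>
      have hne (h : Fin (m + 1)) : (0 : Fin (m + 2)) ≠ h.succ := (Fin.succ_ne_zero h).symm
      simp only [diagProd_succ t, Fin.castSucc_succ, tail_comp_swap_succ, Function.comp_apply,
        swap_apply_of_ne_of_ne (hne _) (hne _), ← mul_add]
      rw [ih (t := fun s => t (s + 1)) fun s => ht (s + 1)]

lemma qminor_update_row_eq_zero [IsAddTorsionFree S] (t : ℕ → I → I → S) (a b : Fin m → I)
    {i j : Fin m} (hij : i ≠ j) : qminor t (update a i (a j)) b = 0 :=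
  eq_zero_of_comp_swap_eq_neg (f := fun x => qminor t x b) (i := i) (j := j)
    (alternate_comp_swap _ _ hij) (by simp [hij.symm])

lemma IsFused.qminor_column_comp_swap_succ [IsAddTorsionFree S] {t : ℕ → I → I → S}
    (ht : IsFused t) (a b : Fin (m + 1) → I) (i : Fin m) :
    qminor t a (b ∘ swap i.castSucc i.succ) = -qminor t a b := by
  set F : (Fin (m + 1) → I) → S :=
    fun x => diagProd t x b + diagProd t x (b ∘ swap i.castSucc i.succ)
  have hF : alternate F a = qminor t a b + qminor t a (b ∘ swap i.castSucc i.succ) :=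
    alternate_add _ _ a
  have hswap : alternate F a = -alternate F a := by
    rw [← alternate_fun_comp_swap F a (Fin.castSucc_lt_succ (i := i)).ne]
    simp only [F, ht.diagProd_add_comp_swap]
  rw [self_eq_neg, hF, add_comm] at hswap
  exact eq_neg_of_add_eq_zero_left hswap

lemma IsFused.qminor_column_comp_perm [IsAddTorsionFree S] {t : ℕ → I → I → S} (ht : IsFused t)
    (a b : Fin m → I) (π : Perm (Fin m)) :
    qminor t a (b ∘ π) = Perm.sign π • qminor t a b := by
  cases m with
  | zero => simp [Subsingleton.elim π 1]
  | succ m =>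
    have hπ : π ∈ Submonoid.closure (Set.range fun i : Fin m => swap i.castSucc i.succ) := by
      rw [Perm.mclosure_swap_castSucc_succ]; trivial
    induction hπ using Submonoid.closure_induction generalizing b with
    | mem _ h =>
      obtain ⟨i, rfl⟩ := h
      rw [ht.qminor_column_comp_swap_succ, Perm.sign_swap (Fin.castSucc_lt_succ (i := i)).ne,
        Units.neg_smul, one_smul]
    | one => simp
    | mul ρ σ _ _ hρ hσ =>
      rw [Perm.coe_mul, ← Function.comp_assoc, hσ, hρ, smul_smul, Perm.sign_mul, mul_comm]

lemma IsFused.qminor_column_comp_swap [IsAddTorsionFree S] {t : ℕ → I → I → S} (ht : IsFused t)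
    (a b : Fin m → I) {i j : Fin m} (hij : i ≠ j) :
    qminor t a (b ∘ swap i j) = -qminor t a b := by
  rw [ht.qminor_column_comp_perm, Perm.sign_swap hij, Units.neg_smul, one_smul]

lemma IsFused.qminor_update_column_eq_zero [IsAddTorsionFree S] {t : ℕ → I → I → S}
    (ht : IsFused t) (a b : Fin m → I) {i j : Fin m} (hij : i ≠ j) :
    qminor t a (update b i (b j)) = 0 :=
  eq_zero_of_comp_swap_eq_neg (f := qminor t a) (i := i) (j := j)
    (ht.qminor_column_comp_swap _ _ hij) (by simp [hij.symm])

/-- The summand of the expansion of the quantum minor along its first column, before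
antisymmetrization over the rows. -/
def expandFirst (t : ℕ → I → I → S) (a b : Fin (m + 1) → I) : S :=
  t 0 (a 0) (b 0) * qminor (fun s => t (s + 1)) (Fin.tail a) (Fin.tail b)

-- Each permutation of the last `m` rows extends to one of all rows, with the same sign.
lemma alternate_expandFirst (t : ℕ → I → I → S) (a b : Fin (m + 1) → I) :
    alternate (fun x => expandFirst t x b) a = m.factorial • qminor t a b := by
  let extend (ρ : Perm (Fin m)) : Perm (Fin (m + 1)) := Perm.decomposeFin.symm (0, ρ)
  have hexpand (x : Fin (m + 1) → I) : expandFirst t x b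
      = ∑ ρ : Perm (Fin m), Perm.sign ρ • diagProd t (x ∘ extend ρ) b := by
    simp only [expandFirst, qminor, alternate, Finset.mul_sum, mul_smul_comm, diagProd_succ]
    refine Finset.sum_congr rfl fun ρ _ => ?_
    have htail : Fin.tail (x ∘ extend ρ) = Fin.tail x ∘ ρ := by
      funext r
      simp [extend, Fin.tail]
    rw [htail, Function.comp_apply, Perm.decomposeFin_symm_apply_zero]
  have hterm (ρ : Perm (Fin m)) :
      alternate (fun x => Perm.sign ρ • diagProd t (x ∘ extend ρ) b) a = qminor t a b := by
    have hsign : Perm.sign (extend ρ) = Perm.sign ρ := by simp [extend]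
    rw [alternate_smul, alternate_fun_comp_perm (fun x => diagProd t x b), hsign, smul_smul,
      Int.units_mul_self, one_smul, qminor]
  simp only [hexpand, ← sum_alternate, hterm]
  simp [Fintype.card_perm]

variable {K : Type*} [CommRing K] [Algebra K S]

/-- The matrices `τ` and `t_s` satisfy the defining relation of the Yangian, the difference of
their spectral parameters being `D s / e`. -/
def IsExchange (D : ℕ → K) (e : K) (τ : I → I → S) (t : ℕ → I → I → S) : Prop :=
  ∀ s i j k l, D s • ⁅τ i j, t s k l⁆ = e • (τ k j * t s i l - t s k j * τ i l)

lemma smul_mul_comm {D : K} {x y z : S} (h : D • ⁅x, y⁆ = z) : D • (x * y) = D • (y * x) + z := by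
  rw [← h, Ring.lie_def, smul_sub]
  abel

lemma smul_lie_mul {D D' : K} {x y z w w' : S} (hy : D • ⁅x, y⁆ = w) (hz : D' • ⁅x, z⁆ = w') :
    D' • D • ⁅x, y * z⁆ = D' • (w * z) + D • (y * w') := by
  have hleibniz : ⁅x, y * z⁆ = ⁅x, y⁆ * z + y * ⁅x, z⁆ := by
    simp only [Ring.lie_def, sub_mul, mul_sub, mul_assoc]
    abel
  rw [hleibniz, ← hy, ← hz, smul_add, smul_add, smul_mul_assoc, mul_smul_comm,
    smul_comm D' D (y * _)]

variable {D : ℕ → K} {e : K} {τ : I → I → S} {t : ℕ → I → I → S}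

lemma IsExchange.smul_mul_left_comm (hτ : IsExchange D e τ t) (s : ℕ) (i j k l : I) (z : S) :
    D s • (t s k l * (τ i j * z)) = D s • (τ i j * (t s k l * z))
      - e • (τ k j * (t s i l * z)) + e • (t s k j * (τ i l * z)) := by
  have h := congrArg (· * z) (smul_mul_comm (hτ s i j k l))
  simp only [add_mul, sub_mul, smul_mul_assoc, mul_assoc, smul_sub] at h
  rw [h]
  abel

lemma tail_comp_swap_zero_succ (a : Fin (m + 1) → I) (i : Fin m) :
    Fin.tail (a ∘ swap 0 i.succ) = update (Fin.tail a) i (a 0) := by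
  funext r
  obtain rfl | hr := eq_or_ne r i
  · simp [Fin.tail]
  · have hr' : r.succ ≠ i.succ := (Fin.succ_injective m).ne hr
    simp [Fin.tail, swap_apply_of_ne_of_ne (Fin.succ_ne_zero r) hr', hr]

/-- The difference of row and column substitutions to which the commutator of `τ k l` with a
quantum minor is proportional. -/
def substDiff (τ : I → I → S) (t : ℕ → I → I → S) (a b : Fin m → I) (k l : I) : S :=
  ∑ i, τ (a i) l * qminor t (update a i k) b - ∑ i, qminor t a (update b i l) * τ k (b i)

-- The terms in `x ∘ swap 0 i.succ` come from moving `τ` past `t 0`. Antisymmetrization turns them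
-- into further copies of the neighbouring ones, so that every coefficient becomes `D 0 + e = D 1`.
lemma IsExchange.smul_lie_expandFirst (hτ : IsExchange D e τ t) (a b : Fin (m + 1) → I) (k l : I)
    (ih : ∀ k l, D 1 • ⁅τ k l, qminor (fun s => t (s + 1)) (Fin.tail a) (Fin.tail b)⁆
      = e • substDiff τ (fun s => t (s + 1)) (Fin.tail a) (Fin.tail b) k l) :
    D 1 • D 0 • ⁅τ k l, expandFirst t a b⁆
      = e • (D 1 • (τ (a 0) l * expandFirst t (update a 0 k) b)
          + ∑ i : Fin m, (D 0 • (τ (a i.succ) l * expandFirst t (update a i.succ k) b)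
            - e • (τ (a 0) l * expandFirst t (update (a ∘ swap 0 i.succ) i.succ k) b))
          - (D 1 • (expandFirst t a (update b 0 l) * τ k (b 0))
          + ∑ i : Fin m, (D 0 • (expandFirst t a (update b i.succ l) * τ k (b i.succ))
            - e • (expandFirst t a (update b i.succ l ∘ swap 0 i.succ) * τ k (b i.succ))))) := by
  have hcomm := smul_mul_comm (ih k (b 0))
  have hne (i : Fin m) : (0 : Fin (m + 1)) ≠ i.succ := (Fin.succ_ne_zero i).symm
  rw [expandFirst, smul_lie_mul (hτ 0 _ _ _ _) (ih k l)]
  simp only [smul_mul_assoc, sub_mul, mul_assoc, smul_sub, smul_comm (D 1) e, mul_smul_comm,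
    smul_comm (D 0) e]
  simp only [← smul_sub, ← smul_add]
  congr 1
  rw [smul_sub, ← mul_smul_comm (D 1) (t 0 (a 0) l), hcomm]
  simp only [substDiff, expandFirst, tail_comp_swap_zero_succ, Fin.tail_update_zero,
    Fin.tail_update_succ, update_idem, update_self, update_of_ne (hne _), Function.comp_apply,
    swap_apply_left]
  simp only [mul_add, mul_sub, smul_sub, mul_smul_comm, mul_assoc, Finset.mul_sum,
    Finset.smul_sum, hτ.smul_mul_left_comm, Finset.sum_sub_distrib, Finset.sum_add_distrib]
  simp only [Fin.tail]
  abel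

lemma alternate_smul_add_sum_sub_comp_swap {M : Type*} [AddCommGroup M] [Module K M] {D e : K}
    (u : Fin (m + 1) → (Fin (m + 1) → I) → M) (a : Fin (m + 1) → I) :
    alternate (fun x => (D + e) • u 0 x
        + ∑ i : Fin m, (D • u i.succ x - e • u i.succ (x ∘ swap 0 i.succ))) a
      = (D + e) • ∑ i, alternate (u i) a := by
  have hterm (i : Fin m) :
      alternate (fun x => D • u i.succ x - e • u i.succ (x ∘ swap 0 i.succ)) a
        = (D + e) • alternate (u i.succ) a := by
    rw [alternate_sub, alternate_smul, alternate_smul,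
      alternate_fun_comp_swap _ _ (Fin.succ_ne_zero i).symm, smul_neg, sub_neg_eq_add, add_smul]
  rw [alternate_add, ← sum_alternate, Finset.sum_congr rfl fun i _ => hterm i, alternate_smul,
    ← Finset.smul_sum, ← smul_add, Fin.sum_univ_succ fun i => alternate (u i) a]

lemma alternate_expandFirst_update_row (τ : I → I → S) (t : ℕ → I → I → S) (D e : K)
    (a b : Fin (m + 1) → I) (k l : I) :
    alternate (fun x => (D + e) • (τ (x 0) l * expandFirst t (update x 0 k) b)
        + ∑ i : Fin m, (D • (τ (x i.succ) l * expandFirst t (update x i.succ k) b)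
          - e • (τ (x 0) l * expandFirst t (update (x ∘ swap 0 i.succ) i.succ k) b))) a
      = m.factorial • (D + e) • ∑ i, τ (a i) l * qminor t (update a i k) b := by
  have hcollect := alternate_smul_add_sum_sub_comp_swap (D := D) (e := e)
    (fun i x => τ (x i) l * expandFirst t (update x i k) b) a
  simp only [Function.comp_apply, swap_apply_right] at hcollect
  rw [hcollect, sum_alternate_update fun c x => τ c l * expandFirst t x b]
  simp only [alternate_mul_left, alternate_expandFirst, mul_smul_comm, ← Finset.smul_sum,
    smul_comm m.factorial]

lemma IsFused.alternate_expandFirst_update_column [IsAddTorsionFree S] (ht : IsFused t)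
    (τ : I → I → S) (D e : K) (a b : Fin (m + 1) → I) (k l : I) :
    alternate (fun x => (D + e) • (expandFirst t x (update b 0 l) * τ k (b 0))
        + ∑ i : Fin m, (D • (expandFirst t x (update b i.succ l) * τ k (b i.succ))
          - e • (expandFirst t x (update b i.succ l ∘ swap 0 i.succ) * τ k (b i.succ)))) a
      = m.factorial • (D + e) • ∑ i, qminor t a (update b i l) * τ k (b i) := by
  have hne (i : Fin m) : (0 : Fin (m + 1)) ≠ i.succ := (Fin.succ_ne_zero i).symm
  simp only [alternate_add, ← sum_alternate, alternate_sub, alternate_smul, alternate_mul_right,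
    alternate_expandFirst, ht.qminor_column_comp_swap _ _ (hne _), Fin.sum_univ_succ, smul_neg,
    neg_mul, sub_neg_eq_add, ← add_smul, smul_mul_assoc, smul_add, Finset.smul_sum,
    smul_comm m.factorial]

theorem IsExchange.smul_lie_qminor [IsAddTorsionFree S] (hτ : IsExchange D e τ t)
    (ht : IsFused t) (hD : ∀ s, D (s + 1) = D s + e) (hreg : ∀ s, IsSMulRegular S (D (s + 1)))
    (a b : Fin m → I) (k l : I) :
    D 0 • ⁅τ k l, qminor t a b⁆ = e • substDiff τ t a b k l := by
  induction m generalizing D t k l with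
  | zero => simp [qminor, alternate, diagProd, substDiff, Ring.lie_def]
  | succ m ih =>
    have hpoint (x : Fin (m + 1) → I) := hτ.smul_lie_expandFirst x b k l fun k l =>
      ih (fun s => hτ (s + 1)) (fun s => ht (s + 1)) (fun s => hD (s + 1))
        (fun s => hreg (s + 1)) _ _ k l
    have hD1 : D 1 = D 0 + e := hD 0
    refine hreg 0 (nsmul_right_injective m.factorial_ne_zero ?_)
    calc m.factorial • D 1 • D 0 • ⁅τ k l, qminor t a b⁆
        = alternate (fun x => D 1 • D 0 • ⁅τ k l, expandFirst t x b⁆) a := by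
          rw [alternate_smul, alternate_smul, ← lie_alternate, alternate_expandFirst]
          simp only [Ring.lie_def, mul_smul_comm, smul_mul_assoc, ← smul_sub,
            smul_comm m.factorial]
      _ = m.factorial • D 1 • e • substDiff τ t a b k l := by
          simp only [hpoint]
          rw [alternate_smul, alternate_sub, hD1, alternate_expandFirst_update_row,
            ht.alternate_expandFirst_update_column, ← smul_sub, ← smul_sub, ← substDiff,
            smul_comm e, smul_comm e]

-- The repeated indices in the substitutions kill all terms but the ones in which the entry of `τ`
-- is again `τ (a i) (b j)`.
lemma IsFused.substDiff_apply_apply [IsAddTorsionFree S] (ht : IsFused t) (τ : I → I → S)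
    (a b : Fin m → I) (i j : Fin m) :
    substDiff τ t a b (a i) (b j) = ⁅τ (a i) (b j), qminor t a b⁆ := by
  rw [substDiff, Ring.lie_def, Fintype.sum_eq_single i fun r hr => ?_,
    Fintype.sum_eq_single j fun r hr => ?_, Function.update_eq_self, Function.update_eq_self]
  · rw [ht.qminor_update_column_eq_zero a b hr, zero_mul]
  · rw [qminor_update_row_eq_zero t a b hr, mul_zero]

theorem IsExchange.commute_qminor [IsAddTorsionFree S] (hτ : IsExchange D e τ t)
    (ht : IsFused t) (hD : ∀ s, D (s + 1) = D s + e) (hreg : ∀ s, IsSMulRegular S (D (s + 1)))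
    (hreg' : IsSMulRegular S (D 0 - e)) (a b : Fin m → I) (i j : Fin m) :
    Commute (τ (a i) (b j)) (qminor t a b) := by
  have hlie := hτ.smul_lie_qminor ht hD hreg a b (a i) (b j)
  rw [ht.substDiff_apply_apply, ← sub_eq_zero, ← sub_smul] at hlie
  exact sub_eq_zero.1 (hreg'.right_eq_zero_of_smul hlie)

end QuantumMinor

section Evaluation

/-- The expansion of `(v - c)⁻¹` in powers of `X = v⁻¹`. -/
noncomputable def recipShift (c : ℤ) : ℤ⟦X⟧ :=
  X * rescale c (mk 1)

lemma recipShift_eq_add (c : ℤ) : recipShift c = X + c • (X * recipShift c) := by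
  have hgeom := congrArg (rescale c) (mk_one_mul_one_sub_eq_one ℤ)
  rw [map_mul, map_sub, map_one, rescale_X, mul_sub, mul_one, sub_eq_iff_eq_add] at hgeom
  rw [recipShift, zsmul_eq_mul, ← map_intCast (C (R := ℤ))]
  nth_rw 1 [hgeom]
  simp only [Int.cast_id]
  ring

lemma coeff_recipShift_pow {c : ℤ} {r m : ℕ} (h : r ≤ m) :
    coeff m (recipShift c ^ r) = (m - 1).choose (m - r) * c ^ (m - r) := by
  rw [recipShift, mul_pow, coeff_X_pow_mul', if_pos h, ← map_pow, coeff_rescale, mul_comm]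
  cases r with
  | zero => cases m <;> simp [coeff_one]
  | succ d =>
    obtain ⟨k, rfl⟩ := Nat.exists_eq_add_of_le h
    rw [mk_one_pow_eq_mk_choose_add, coeff_mk]
    rw [show d + 1 + k - (d + 1) = k by omega, show d + 1 + k - 1 = d + k by omega,
      Nat.choose_symm_add]

variable {A : Type*} [Ring A]

instance instIsAddTorsionFreePowerSeries [IsAddTorsionFree A] : IsAddTorsionFree A⟦X⟧ where
  nsmul_right_injective _ hn F G h := ext fun m => nsmul_right_injective hn <|
    (map_nsmul (coeff m) _ F).symm.trans ((congrArg (coeff m) h).trans (map_nsmul _ _ G))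

lemma commute_of_commute_coeff {f : A⟦X⟧} (hf : ∀ m x, Commute (coeff m f) x) (F : A⟦X⟧) :
    Commute f F := by
  ext m
  rw [coeff_mul, coeff_mul, ← Finset.Nat.sum_antidiagonal_swap]
  exact Finset.sum_congr rfl fun x _ => hf _ _

lemma commute_C {x : A} (hx : ∀ y, Commute x y) (F : A⟦X⟧) : Commute (C x) F :=
  commute_of_commute_coeff (fun m y => by
    rw [coeff_C]
    split_ifs
    exacts [hx y, Commute.zero_left y]) F

lemma commute_map_intCast (f : ℤ⟦X⟧) (F : A⟦X⟧) : Commute (map (Int.castRingHom A) f) F :=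
  commute_of_commute_coeff (fun m y => by
    rw [coeff_map]
    exact Int.cast_commute _ y) F

/-- The image in `A⟦X⟧` of the expansion of `(v - c)⁻¹`. -/
noncomputable def recipShiftIn (A : Type*) [Ring A] (c : ℤ) : A⟦X⟧ :=
  map (Int.castRingHom A) (recipShift c)

lemma coeff_recipShiftIn_pow_mul_of_lt {c : ℤ} {r m : ℕ} (h : m < r) (F : A⟦X⟧) :
    coeff m (recipShiftIn A c ^ r * F) = 0 := by
  rw [recipShiftIn, recipShift, RingHom.map_mul, map_X, (commute_X _).symm.mul_pow, mul_assoc,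
    coeff_X_pow_mul', if_neg h.not_ge]

/-- The value `∑ r, (v - c)⁻ʳ F_r(v)` of `F(u, v) = ∑ r, u⁻ʳ F_r(v)` at `u = v - c`; only the
terms with `r ≤ m` contribute to its `m`-th coefficient. -/
noncomputable def evalShift (c : ℤ) : A⟦X⟧⟦X⟧ →+ A⟦X⟧ where
  toFun F := mk fun m => coeff m (∑ r ∈ Finset.range (m + 1), recipShiftIn A c ^ r * coeff r F)
  map_zero' := by ext; simp
  map_add' F G := by ext; simp [mul_add, Finset.sum_add_distrib]

lemma coeff_evalShift (c : ℤ) (F : A⟦X⟧⟦X⟧) {m N : ℕ} (h : m < N) :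
    coeff m (evalShift c F) = coeff m (∑ r ∈ Finset.range N, recipShiftIn A c ^ r * coeff r F) := by
  simp only [evalShift, AddMonoidHom.coe_mk, ZeroHom.coe_mk, coeff_mk, map_sum]
  refine Finset.sum_subset (by simpa using h) fun r _ hr => ?_
  exact coeff_recipShiftIn_pow_mul_of_lt (by simpa using hr) _

lemma coeff_mul_congr {f f' g g' : A⟦X⟧} {m : ℕ} (hf : ∀ i ≤ m, coeff i f = coeff i f')
    (hg : ∀ i ≤ m, coeff i g = coeff i g') : coeff m (f * g) = coeff m (f' * g') := by
  rw [coeff_mul, coeff_mul]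
  refine Finset.sum_congr rfl fun x hx => ?_
  rw [hf _ (Finset.HasAntidiagonal.antidiagonal.fst_le hx),
    hg _ (Finset.HasAntidiagonal.antidiagonal.snd_le hx)]

lemma evalShift_mul_C (c : ℤ) (F : A⟦X⟧⟦X⟧) (g : A⟦X⟧) :
    evalShift c (F * C g) = evalShift c F * g := by
  ext m
  rw [coeff_mul_congr (fun i hi => coeff_evalShift c F (Nat.lt_succ_of_le hi)) fun _ _ => rfl,
    coeff_evalShift c _ m.lt_succ_self]
  simp only [coeff_mul_C, Finset.sum_mul, mul_assoc]

lemma evalShift_C_mul (c : ℤ) (g : A⟦X⟧) (F : A⟦X⟧⟦X⟧) :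
    evalShift c (C g * F) = g * evalShift c F := by
  ext m
  rw [coeff_mul_congr (fun _ _ => rfl) fun i hi => coeff_evalShift c F (Nat.lt_succ_of_le hi),
    coeff_evalShift c _ m.lt_succ_self]
  simp only [coeff_C_mul, Finset.mul_sum, ← mul_assoc]
  simp only [recipShiftIn, ← map_pow, (commute_map_intCast _ g).eq]

lemma evalShift_X_mul (c : ℤ) (F : A⟦X⟧⟦X⟧) :
    evalShift c (X * F) = recipShiftIn A c * evalShift c F := by
  ext m
  rw [coeff_mul_congr (fun _ _ => rfl) fun i hi => coeff_evalShift c F (Nat.lt_succ_of_le hi),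
    coeff_evalShift c _ (by omega : m < m + 1 + 1), Finset.sum_range_succ']
  simp only [coeff_zero_X_mul, mul_zero, add_zero, coeff_succ_X_mul, Finset.mul_sum,
    pow_succ', mul_assoc]

lemma recipShiftIn_mul (c : ℤ) (f : A⟦X⟧) :
    recipShiftIn A c * f = X * f + c • (X * (recipShiftIn A c * f)) := by
  have h := congrArg (map (Int.castRingHom A)) (recipShift_eq_add c)
  rw [map_add, map_zsmul, RingHom.map_mul, map_X, ← recipShiftIn] at h
  nth_rw 1 [h]
  rw [add_mul, smul_mul_assoc, mul_assoc]

lemma recipShiftIn_mul_cancel {c : ℤ} {f g : A⟦X⟧}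
    (h : recipShiftIn A c * f = recipShiftIn A c * g) : f = g := by
  have hf := recipShiftIn_mul c f
  rw [h] at hf
  exact X_mul_cancel (add_right_cancel (hf.symm.trans (recipShiftIn_mul c g)))

lemma X_mul_sub_recipShiftIn_mul (c : ℤ) (f : A⟦X⟧) :
    X * f - recipShiftIn A c * f + (c + 1) • (recipShiftIn A c * (X * f))
      = recipShiftIn A c * (X * f) := by
  have hcomm : X * (recipShiftIn A c * f) = recipShiftIn A c * (X * f) := by
    rw [← mul_assoc, ← (commute_X _).eq, mul_assoc]
  have hrecip := recipShiftIn_mul c f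
  rw [hcomm] at hrecip
  rw [hrecip, add_smul, one_smul]
  abel

end Evaluation

section SpectralDiff

variable (A : Type*) [Ring A]

/-- The outer variable `u⁻¹` of `A⟦v⁻¹⟧⟦u⁻¹⟧`. -/
noncomputable def outerVar : Subring.center A⟦X⟧⟦X⟧ :=
  ⟨X, Subring.mem_center_iff.2 commute_X⟩

/-- The inner variable `v⁻¹` of `A⟦v⁻¹⟧⟦u⁻¹⟧`. -/
noncomputable def innerVar : Subring.center A⟦X⟧⟦X⟧ :=
  ⟨C X, Subring.mem_center_iff.2 fun F => (commute_C (fun g => (commute_X g).symm) F).symm.eq⟩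

/-- The difference `u - v + c` of spectral parameters, multiplied by `u⁻¹ v⁻¹` to clear
denominators. -/
noncomputable def spectralDiff (c : ℤ) : Subring.center A⟦X⟧⟦X⟧ :=
  innerVar A - outerVar A + c • (outerVar A * innerVar A)

variable {A}

lemma outerVar_mul_innerVar_smul (F : A⟦X⟧⟦X⟧) :
    (outerVar A * innerVar A) • F = X * (C X * F) :=
  mul_assoc X (C X) F

lemma spectralDiff_smul (c : ℤ) (F : A⟦X⟧⟦X⟧) :
    spectralDiff A c • F = C X * F - X * F + c • (X * (C X * F)) := by
  rw [spectralDiff, add_smul, sub_smul, smul_assoc, outerVar_mul_innerVar_smul]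
  rfl

lemma coeff_zero_spectralDiff_smul (c : ℤ) (F : A⟦X⟧⟦X⟧) :
    coeff 0 (spectralDiff A c • F) = X * coeff 0 F := by
  rw [spectralDiff_smul, map_add, map_sub, map_zsmul, coeff_C_mul, coeff_zero_X_mul,
    coeff_zero_X_mul, smul_zero, sub_zero, add_zero]

lemma coeff_succ_spectralDiff_smul (c : ℤ) (p : ℕ) (F : A⟦X⟧⟦X⟧) :
    coeff (p + 1) (spectralDiff A c • F)
      = X * coeff (p + 1) F - coeff p F + c • (X * coeff p F) := by
  rw [spectralDiff_smul, map_add, map_sub, map_zsmul, coeff_C_mul, coeff_succ_X_mul,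
    coeff_succ_X_mul, coeff_C_mul]

lemma isSMulRegular_spectralDiff (c : ℤ) : IsSMulRegular A⟦X⟧⟦X⟧ (spectralDiff A c) := by
  refine IsSMulRegular.of_right_eq_zero_of_smul fun F hF => ?_
  ext1 p
  induction p with
  | zero =>
    refine X_mul_cancel ?_
    rw [← coeff_zero_spectralDiff_smul c, hF, map_zero, mul_zero]
  | succ p ih =>
    have hcoeff := coeff_succ_spectralDiff_smul c p F
    rw [hF, ih, map_zero, map_zero, mul_zero, smul_zero, sub_zero, add_zero] at hcoeff
    exact X_mul_cancel (by rw [← hcoeff, map_zero, mul_zero])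

lemma spectralDiff_succ (s : ℕ) :
    spectralDiff A ((s + 1 : ℕ) : ℤ) = spectralDiff A s + outerVar A * innerVar A := by
  rw [spectralDiff, spectralDiff, Nat.cast_succ, add_smul, one_smul, add_assoc]

lemma spectralDiff_zero_sub :
    spectralDiff A 0 - outerVar A * innerVar A = spectralDiff A (-1) := by
  rw [spectralDiff, spectralDiff, zero_smul, neg_smul, one_smul, add_zero, sub_eq_add_neg]

end SpectralDiff

section RTT

variable {A I : Type*} [Ring A]

/-- The defining relations of the Yangian for a family of elements of a ring, with the condition
`T 0 i j = δ_ij` weakened to centrality. -/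
structure IsRTT (T : ℕ → I → I → A) : Prop where
  zero_commute (i j : I) (x : A) : Commute (T 0 i j) x
  lie_succ (r s : ℕ) (i j k l : I) : ⁅T (r + 1) i j, T s k l⁆ - ⁅T r i j, T (s + 1) k l⁆
    = T r k j * T s i l - T s k j * T r i l

/-- The generating series `t_ij(u)`, with `X = u⁻¹` the outer variable of `A⟦X⟧⟦X⟧`. -/
noncomputable def genSeries (T : ℕ → I → I → A) (i j : I) : A⟦X⟧⟦X⟧ :=
  mk fun r => C (T r i j)

/-- The series `t_ij(v - s)`. -/
noncomputable def shiftedSeries (T : ℕ → I → I → A) (s : ℕ) (i j : I) : A⟦X⟧ :=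
  evalShift s (genSeries T i j)

lemma evalShift_genSeries (T : ℕ → I → I → A) (s : ℕ) (i j : I) :
    evalShift s (genSeries T i j) = shiftedSeries T s i j :=
  rfl

lemma IsRTT.X_mul_lie_C_genSeries {T : ℕ → I → I → A} (hT : IsRTT T) (p : ℕ) (i j k l : I) :
    X * ⁅C (C (T (p + 1) i j)), genSeries T k l⁆ - ⁅C (C (T p i j)), genSeries T k l⁆
      = X * (C (C (T p k j)) * genSeries T i l - genSeries T k j * C (C (T p i l))) := by
  ext1 s
  cases s with
  | zero =>
    rw [map_sub, coeff_zero_X_mul, coeff_zero_X_mul, Ring.lie_def, map_sub, coeff_C_mul,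
      coeff_mul_C, genSeries, coeff_mk, ← RingHom.map_mul, ← RingHom.map_mul,
      (hT.zero_commute k l _).eq, sub_self, sub_zero]
  | succ s =>
    simp only [genSeries, Ring.lie_def, map_sub, coeff_succ_X_mul, coeff_C_mul, coeff_mul_C,
      coeff_mk, ← map_mul]
    simp only [← map_sub, ← hT.lie_succ, Ring.lie_def]

lemma IsRTT.X_mul_lie_C_shiftedSeries {T : ℕ → I → I → A} (hT : IsRTT T) (p s : ℕ) (i j k l : I) :
    X * ⁅C (T (p + 1) i j), shiftedSeries T s k l⁆
      = ⁅C (T p i j), shiftedSeries T s k l⁆ - s • (X * ⁅C (T p i j), shiftedSeries T s k l⁆)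
        + X * (C (T p k j) * shiftedSeries T s i l - shiftedSeries T s k j * C (T p i l)) := by
  have heval := congrArg (evalShift s) (hT.X_mul_lie_C_genSeries p i j k l)
  simp only [Ring.lie_def, map_sub, evalShift_X_mul, evalShift_C_mul, evalShift_mul_C,
    evalShift_genSeries] at heval
  set E := ⁅C (T (p + 1) i j), shiftedSeries T s k l⁆
  set F := ⁅C (T p i j), shiftedSeries T s k l⁆
  set H := C (T p k j) * shiftedSeries T s i l - shiftedSeries T s k j * C (T p i l)
  have heval' : recipShiftIn A s * (E - H) = F := by
    rw [mul_sub, sub_eq_iff_eq_add, ← sub_eq_iff_eq_add']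
    exact heval
  have hrecip := recipShiftIn_mul s (E - H)
  rw [heval', natCast_zsmul, ← sub_eq_iff_eq_add, mul_sub] at hrecip
  rw [hrecip, sub_add_cancel]

lemma IsRTT.isExchange {T : ℕ → I → I → A} (hT : IsRTT T) :
    IsExchange (fun s => spectralDiff A s) (outerVar A * innerVar A) (genSeries T)
      fun s i j => C (shiftedSeries T s i j) := by
  intro s i j k l
  rw [outerVar_mul_innerVar_smul]
  ext1 p
  cases p with
  | zero =>
    rw [coeff_zero_spectralDiff_smul, coeff_zero_X_mul, Ring.lie_def, map_sub, coeff_mul_C,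
      coeff_C_mul, genSeries, coeff_mk, (commute_C (hT.zero_commute i j) _).eq, sub_self, mul_zero]
  | succ p =>
    have hrel := hT.X_mul_lie_C_shiftedSeries p s i j k l
    rw [coeff_succ_spectralDiff_smul, coeff_succ_X_mul, coeff_C_mul]
    simp only [Ring.lie_def, map_sub, coeff_mul_C, coeff_C_mul, genSeries, coeff_mk,
      natCast_zsmul] at hrel ⊢
    rw [hrel]
    abel

-- At `u = v - s` the exchange relation of `t(u)` and `t(v - s - 1)` has spectral difference `1`.
lemma IsRTT.isFused {T : ℕ → I → I → A} (hT : IsRTT T) : IsFused (shiftedSeries T) := by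
  intro s i j k l
  have heval := congrArg (evalShift s) (hT.isExchange (s + 1) i j k l)
  rw [spectralDiff_smul, outerVar_mul_innerVar_smul] at heval
  simp only [Ring.lie_def, map_add, map_sub, map_zsmul, evalShift_X_mul, evalShift_C_mul,
    evalShift_mul_C, evalShift_genSeries] at heval
  rw [Nat.cast_succ, X_mul_sub_recipShiftIn_mul] at heval
  exact X_mul_cancel (recipShiftIn_mul_cancel heval)

lemma coeff_shiftedSeries (T : ℕ → I → I → A) (s : ℕ) (i j : I) (m : ℕ) :
    coeff m (shiftedSeries T s i j)
      = ∑ r ∈ Finset.range (m + 1), ((m - 1).choose (m - r) * s ^ (m - r)) • T r i j := by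
  rw [shiftedSeries, coeff_evalShift _ _ m.lt_succ_self, map_sum]
  refine Finset.sum_congr rfl fun r hr => ?_
  rw [genSeries, coeff_mk, coeff_mul_C, recipShiftIn, ← map_pow, coeff_map,
    coeff_recipShift_pow (Nat.lt_succ_iff.1 (Finset.mem_range.1 hr)), nsmul_eq_mul]
  simp

end RTT

section Operators

variable {V : Type*} [AddCommGroup V] [Module ℂ V] {n : ℕ}

lemma isRTT_of_isYangianRep {T : ℕ → Fin n → Fin n → Module.End ℂ V} (hT : IsYangianRep n T) :
    IsRTT T where
  zero_commute i j x := by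
    rw [hT.1]
    split_ifs
    exacts [Commute.one_left x, Commute.zero_left x]
  lie_succ := hT.2

lemma mk_mulSer (f g : ℕ → Module.End ℂ V) : mk (mulSer f g) = mk f * mk g := by
  ext1 m
  rw [coeff_mul, coeff_mk, mulSer, Finset.Nat.sum_antidiagonal_eq_sum_range_succ_mk]
  simp only [coeff_mk]
  rfl

lemma mk_prodSer (L : List (ℕ → Module.End ℂ V)) : mk (prodSer L) = (L.map mk).prod := by
  induction L with
  | nil =>
    ext1 m
    simp only [prodSer, coeff_mk, List.map_nil, List.prod_nil, coeff_one]
    rfl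
  | cons f L ih => rw [prodSer, mk_mulSer, ih, List.map_cons, List.prod_cons]

lemma mk_shiftSer (T : ℕ → Fin n → Fin n → Module.End ℂ V) (s : ℕ) (i j : Fin n) :
    mk (shiftSer (s : ℂ) fun r => T r i j) = shiftedSeries T s i j := by
  ext1 m
  rw [coeff_mk, coeff_shiftedSeries, shiftSer]
  exact_mod_cast Finset.sum_congr rfl fun r _ => Nat.cast_smul_eq_nsmul ℂ _ (T r i j)

lemma coeff_qminor_shiftedSeries (T : ℕ → Fin n → Fin n → Module.End ℂ V) {l : ℕ}
    (a b : Fin l → Fin n) (q : ℕ) :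
    coeff q (qminor (shiftedSeries T) a b) = qminorSer T l a b q := by
  rw [qminor, alternate, qminorSer, map_sum]
  refine Finset.sum_congr rfl fun σ _ => ?_
  rw [Units.smul_def, map_zsmul, Int.cast_smul_eq_zsmul, ← coeff_mk q (prodSer _), mk_prodSer,
    List.map_ofFn]
  simp only [Function.comp_def, mk_shiftSer, diagProd]

end Operators

end Yangian

open Yangian PowerSeries in
theorem tser_commutes_with_qminor_general {A I : Type*} [Ring A] [IsAddTorsionFree A]
    {T : ℕ → I → I → A} (hT : IsRTT T) {m : ℕ} (a b : Fin m → I) (i j : Fin m) (p q : ℕ) :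
    Commute (T p (a i) (b j)) (coeff q (qminor (shiftedSeries T) a b)) := by
  have hreg : IsSMulRegular A⟦X⟧⟦X⟧ (spectralDiff A 0 - outerVar A * innerVar A) := by
    rw [spectralDiff_zero_sub]
    exact isSMulRegular_spectralDiff (-1)
  have hcomm := hT.isExchange.commute_qminor (hT.isFused.map C) spectralDiff_succ
    (fun _ => isSMulRegular_spectralDiff _) hreg a b i j
  rw [← map_qminor] at hcomm
  have hp := congrArg (coeff p) hcomm.eq
  rw [coeff_mul_C, coeff_C_mul, genSeries, coeff_mk] at hp
  have hq := congrArg (coeff q) hp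
  rwa [coeff_mul_C, coeff_C_mul] at hq

/-- Every coefficient of the series `t_{c_i d_j}(u)` commutes
with every coefficient of the quantum minor `t^{c_1⋯c_l}_{d_1⋯d_l}(v)`. -/
theorem tser_commutes_with_qminor
    (n : ℕ) {V : Type*} [AddCommGroup V] [Module ℂ V]
    (T : ℕ → Fin n → Fin n → (V →ₗ[ℂ] V)) (hT : IsYangianRep n T)
    (l : ℕ) (c d : Fin l → Fin n) (i j : Fin l) (p q : ℕ) :
    T p (c i) (d j) ∘ₗ qminorSer T l c d q
      = qminorSer T l c d q ∘ₗ T p (c i) (d j) := by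
  have : IsAddTorsionFree (Module.End ℂ V) := .of_isTorsionFree ℂ _
  rw [← Yangian.coeff_qminor_shiftedSeries]
  exact tser_commutes_with_qminor_general (Yangian.isRTT_of_isYangianRep hT) c d i j p q
end
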